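/- arXiv:0911.3565 — 4 statements merged into one kernel-verified Lean document; each statement's English description precedes it below -/
import Mathlib

section
/- Let A be an Artinian Gorenstein local K-algebra with Hilbert function HF_A = {1,n,n,1} (i.e. HF_A(0) = HF_A(3) = 1, HF_A(1) = HF_A(2) = n, and m^4 = 0). Then A is canonically graded: A is isomorphic as a K-algebra to its associated graded ring gr_m(A) = ⊕_{i≥0} m^i/m^{i+1}. -/
/-- The maximal ideal `M = (x_1, …, x_n)` of `R = K[[x_1,…,x_n]]`,
i.e. the ideal of power series with zero constant term. -/
noncomputable def mxR (K : Type*) [Field K] (n : ℕ) : Ideal (MvPowerSeries (Fin n) K) :=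
  RingHom.ker (MvPowerSeries.constantCoeff (σ := Fin n) (R := K))

/-- The Hilbert function of `A = R/I` where `R = K[[x_1,…,x_n]]`:
`HF_A(i) = dim_K (m^i/m^(i+1)) = dim_K A/m^(i+1) - dim_K A/m^i`, computed via
`A/m^j = R/(I + M^j)` where `M = (x_1,…,x_n)`. -/
noncomputable def hilbQ {K : Type*} [Field K] {n : ℕ}
    (I : Ideal (MvPowerSeries (Fin n) K)) (i : ℕ) : ℕ :=
  Module.finrank K (MvPowerSeries (Fin n) K ⧸ (I ⊔ mxR K n ^ (i + 1))) -
    Module.finrank K (MvPowerSeries (Fin n) K ⧸ (I ⊔ mxR K n ^ i))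

/-- `dim_K` of the socle `(0 :_A m)` of `A = R/I`, where `m = M/I` is the
maximal ideal of `A`.  The Artinian local ring `A = R/I` is Gorenstein iff
this equals `1`. -/
noncomputable def socDimQ {K : Type*} [Field K] {n : ℕ}
    (I : Ideal (MvPowerSeries (Fin n) K)) : ℕ :=
  Module.finrank K
    ((Submodule.colon (⊥ : Ideal (MvPowerSeries (Fin n) K ⧸ I))
      ((mxR K n).map (Ideal.Quotient.mk I))).restrictScalars K)

/-- The total degree `|α| = α 1 + ⋯ + α n` of a multi-index. -/
def degM {n : ℕ} (α : Fin n →₀ ℕ) : ℕ := ∑ i, α i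

/-- The ideal `I^*` of `R` generated by the initial forms `f^*` of the elements
`f ∈ I` (for `f ≠ 0` of order `d`, `f^*` is the degree-`d` homogeneous component
of `f`; the set below consists of all such initial forms, together with `0`).
For an ideal `I` with `R/I` Artinian, `R/I^*` is (canonically isomorphic to) the
associated graded ring `gr_m(R/I) = ⊕_{i ≥ 0} m^i/m^(i+1)` of `A = R/I`. -/
noncomputable def initialIdeal {K : Type*} [Field K] {n : ℕ}
    (I : Ideal (MvPowerSeries (Fin n) K)) : Ideal (MvPowerSeries (Fin n) K) :=
  Ideal.span { g | ∃ f ∈ I, ∃ d : ℕ,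
    (∀ α : Fin n →₀ ℕ, degM α < d → MvPowerSeries.coeff α f = 0) ∧
    (∀ α : Fin n →₀ ℕ, MvPowerSeries.coeff α g =
      if degM α = d then MvPowerSeries.coeff α f else 0) }

section helpers
open MvPowerSeries

variable {K : Type*} [Field K] {n : ℕ}

lemma degM_add (a b : Fin n →₀ ℕ) : degM (a + b) = degM a + degM b := by
  simp [degM, Finset.sum_add_distrib]

lemma degM_single (i : Fin n) : degM (Finsupp.single i 1) = 1 := by
  simp [degM, Finsupp.single_apply]

lemma degM_eq_zero {a : Fin n →₀ ℕ} (h : degM a = 0) : a = 0 := by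
  ext i
  simp only [degM, Finset.sum_eq_zero_iff, Finset.mem_univ, true_implies] at h
  simpa using h i

/-- splitting off variables -/
lemma split_vars (f : MvPowerSeries (Fin n) K) (h0 : coeff 0 f = 0) :
    ∃ g : Fin n → MvPowerSeries (Fin n) K,
      (∀ i β, coeff β (g i) = 0 ∨ coeff β (g i) = coeff (Finsupp.single i 1 + β) f) ∧
      f = ∑ i, X i * g i := by
  classical
  let g : Fin n → MvPowerSeries (Fin n) K := fun i β =>
    if ∀ j < i, β j = 0 then coeff (Finsupp.single i 1 + β) f else 0
  have hg : ∀ i β, coeff β (g i) =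
    if ∀ j < i, β j = 0 then coeff (Finsupp.single i 1 + β) f else 0 := fun i β => rfl
  refine ⟨g, fun i β => ?_, ?_⟩
  · rw [hg]; split_ifs <;> simp
  · ext α
    rw [map_sum]
    by_cases hα : α = 0
    · subst hα
      rw [h0]
      symm
      apply Finset.sum_eq_zero
      intro i _
      exact coeff_zero_X_mul _ _
    · have hex : ∃ i, α i ≠ 0 := by
        by_contra hc
        push Not at hc
        exact hα (by ext i; simpa using hc i)
      obtain ⟨i, hi, hmin⟩ : ∃ i, α i ≠ 0 ∧ ∀ j < i, α j = 0 := by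
        obtain ⟨i, hi, hm⟩ := WellFounded.has_min (wellFounded_lt (α := Fin n)) {i | α i ≠ 0} hex
        exact ⟨i, hi, fun j hj => by by_contra hc; exact hm j hc hj⟩
      have hX : ∀ k, coeff α (X k * g k) =
          if Finsupp.single k 1 ≤ α then coeff (α - Finsupp.single k 1) (g k) else 0 := by
        intro k
        rw [X, coeff_monomial_mul]; simp
      rw [Finset.sum_eq_single i]
      · have hle : Finsupp.single i 1 ≤ α := by
          rw [Finsupp.single_le_iff]; omega
        rw [hX, if_pos hle, hg, if_pos, add_tsub_cancel_of_le hle]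
        intro j hj
        simp [hmin j hj]
      · intro k _ hk
        rw [hX]
        split_ifs with hle
        · rw [hg, if_neg]
          intro hall
          rw [Finsupp.single_le_iff] at hle
          rcases lt_trichotomy k i with h | h | h
          · have := hmin k h; omega
          · exact hk h
          · have := hall i h
            simp [hk] at this
            exact hi this
        · rfl
      · simp

lemma X_mem_mxR (i : Fin n) : (X i : MvPowerSeries (Fin n) K) ∈ mxR K n := by
  simp [mxR, RingHom.mem_ker]

lemma mem_pow_iff (d : ℕ) (f : MvPowerSeries (Fin n) K) :
    f ∈ mxR K n ^ d ↔ ∀ α, degM α < d → coeff α f = 0 := by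
  classical
  induction d generalizing f with
  | zero => simp
  | succ d ih =>
    constructor
    · intro hf
      rw [pow_succ] at hf
      induction hf using Submodule.mul_induction_on' with
      | mem_mul_mem a ha b hb =>
        intro α hα
        rw [coeff_mul]
        apply Finset.sum_eq_zero
        rintro ⟨p, q⟩ hpq
        rw [Finset.HasAntidiagonal.mem_antidiagonal] at hpq
        simp only at hpq ⊢
        by_cases hp : degM p < d
        · rw [(ih a).1 ha p hp, zero_mul]
        · have : degM q = 0 := by
            rw [← hpq, degM_add] at hα; omega
          rw [degM_eq_zero this]
          have : coeff 0 b = 0 := by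
            simpa [mxR, RingHom.mem_ker] using hb
          rw [this, mul_zero]
      | add a _ b _ ha hb =>
        intro α hα
        rw [map_add, ha α hα, hb α hα, add_zero]
    · intro h
      obtain ⟨g, hg, hf⟩ := split_vars f (h 0 (by simp [degM]))
      rw [hf]
      apply Ideal.sum_mem
      intro i _
      rw [pow_succ']
      refine Ideal.mul_mem_mul (X_mem_mxR i) ((ih _).2 ?_)
      intro β hβ
      rcases hg i β with h' | h'
      · exact h'
      · rw [h', h _ (by rw [degM_add, degM_single]; omega)]

lemma sub_C_mem (f : MvPowerSeries (Fin n) K) : f - C (constantCoeff f) ∈ mxR K n := by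
  simp [mxR, RingHom.mem_ker]

lemma exists_sigma (Z : Fin n → MvPowerSeries (Fin n) K) (hZ : ∀ i, Z i ∈ mxR K n ^ 2) :
    ∃ σ : MvPowerSeries (Fin n) K →ₐ[K] MvPowerSeries (Fin n) K,
      (∀ i, σ (X i) = X i + Z i) ∧
      ∀ d f, f ∈ mxR K n ^ d → σ f - f ∈ mxR K n ^ (d + 1) := by
  have hZ1 : ∀ i, X i + Z i ∈ mxR K n := fun i =>
    Ideal.add_mem _ (X_mem_mxR i) (Ideal.pow_le_self (by norm_num) (hZ i))
  have hs : HasSubst (fun i => X i + Z i : Fin n → MvPowerSeries (Fin n) K) :=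
    hasSubst_of_constantCoeff_zero fun i => by simpa [mxR, RingHom.mem_ker] using hZ1 i
  let σ : MvPowerSeries (Fin n) K →ₐ[K] MvPowerSeries (Fin n) K := substAlgHom hs
  have hσX : ∀ i, σ (X i) = X i + Z i := fun i => substAlgHom_X hs i
  have hC : ∀ c : K, σ (C c) = C c := fun c => by
    have h := σ.commutes c
    rw [MvPowerSeries.algebraMap_apply] at h
    exact h
  have h0 : ∀ f, σ f - f ∈ mxR K n := by
    intro f
    obtain ⟨g, -, hf⟩ := split_vars (f - C (constantCoeff f)) (by simp)
    have h1 : σ (f - C (constantCoeff f)) ∈ mxR K n := by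
      rw [hf, map_sum]
      refine Ideal.sum_mem _ fun i _ => ?_
      rw [map_mul, hσX]
      exact Ideal.mul_mem_right _ _ (hZ1 i)
    have h2 := Ideal.sub_mem _ h1 (sub_C_mem f)
    rw [map_sub, hC] at h2
    simpa using h2
  have h1 : ∀ f ∈ mxR K n, σ f - f ∈ mxR K n ^ 2 := by
    intro f hf
    obtain ⟨g, -, hf⟩ := split_vars f (by simpa [mxR, RingHom.mem_ker] using hf)
    rw [hf, map_sum, ← Finset.sum_sub_distrib]
    refine Ideal.sum_mem _ fun i _ => ?_
    rw [map_mul, hσX]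
    have : (X i + Z i) * σ (g i) - X i * g i = X i * (σ (g i) - g i) + Z i * σ (g i) := by ring
    rw [this]
    refine Ideal.add_mem _ ?_ (Ideal.mul_mem_right _ _ (hZ i))
    rw [pow_two]
    exact Ideal.mul_mem_mul (X_mem_mxR i) (h0 _)
  refine ⟨σ, hσX, fun d => ?_⟩
  induction d with
  | zero => intro f _; simpa using h0 f
  | succ d ih =>
    intro f hf
    rw [pow_succ] at hf
    induction hf using Submodule.mul_induction_on' with
    | mem_mul_mem a ha b hb =>
      have : σ (a * b) - a * b = (σ a - a) * σ b + a * (σ b - b) := by rw [map_mul]; ring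
      rw [this]
      refine Ideal.add_mem _ ?_ ?_
      · rw [pow_succ]
        refine Ideal.mul_mem_mul (ih a ha) ?_
        have := Ideal.add_mem _ (h0 b) hb
        simpa using this
      · rw [add_assoc, pow_add]
        exact Ideal.mul_mem_mul ha (h1 b hb)
    | add a _ b _ ha hb =>
      rw [map_add, add_sub_add_comm]
      exact Ideal.add_mem _ ha hb

lemma quad_form (g : MvPowerSeries (Fin n) K) (hg : ∀ α, degM α ≠ 2 → coeff α g = 0) :
    ∃ c : Fin n → Fin n → K, g = ∑ i, ∑ j, c i j • (X i * X j) := by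
  obtain ⟨a, ha, hga⟩ := split_vars g (hg 0 (by simp [degM]))
  have ha1 : ∀ i α, degM α ≠ 1 → coeff α (a i) = 0 := by
    intro i α h
    rcases ha i α with h' | h'
    · exact h'
    · rw [h', hg _ (by rw [degM_add, degM_single]; omega)]
  choose b hb hab using fun i => split_vars (a i) (ha1 i 0 (by simp [degM]))
  have hb1 : ∀ i j, b i j = C (coeff 0 (b i j)) := by
    intro i j
    ext α
    classical
    rw [coeff_C]
    split_ifs with h
    · rw [h]
    · rcases hb i j α with h' | h'
      · exact h'
      · rw [h', ha1 _ _]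
        rw [degM_add, degM_single]
        intro hh
        exact h (degM_eq_zero (by omega))
  refine ⟨fun i j => coeff 0 (b i j), ?_⟩
  rw [hga]
  refine Finset.sum_congr rfl fun i _ => ?_
  rw [hab i, Finset.mul_sum]
  refine Finset.sum_congr rfl fun j _ => ?_
  rw [hb1 i j, smul_eq_C_mul]
  simp
  ring

lemma factor_surj {I J : Ideal (MvPowerSeries (Fin n) K)} (h : I ≤ J) :
    Function.Surjective (Ideal.Quotient.factorₐ K h).toLinearMap := by
  intro y
  obtain ⟨f, rfl⟩ := Ideal.Quotient.mk_surjective y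
  exact ⟨Ideal.Quotient.mk I f, rfl⟩

lemma finrank_factor {I J : Ideal (MvPowerSeries (Fin n) K)} (h : I ≤ J)
    [Module.Finite K (MvPowerSeries (Fin n) K ⧸ I)] :
    Module.finrank K (MvPowerSeries (Fin n) K ⧸ J) ≤
      Module.finrank K (MvPowerSeries (Fin n) K ⧸ I) :=
  LinearMap.finrank_le_finrank_of_surjective (factor_surj h)

lemma dims (I : Ideal (MvPowerSeries (Fin n) K))
    (h0 : hilbQ I 0 = 1) (h1 : hilbQ I 1 = n) (h2 : hilbQ I 2 = n) (h3 : hilbQ I 3 = 1)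
    (hm4 : mxR K n ^ 4 ≤ I) :
    Module.Finite K (MvPowerSeries (Fin n) K ⧸ I) ∧
    Module.finrank K (MvPowerSeries (Fin n) K ⧸ (I ⊔ mxR K n ^ 2)) = n + 1 ∧
    Module.finrank K (MvPowerSeries (Fin n) K ⧸ I) = 2 * n + 2 := by
  unfold hilbQ at h0 h1 h2 h3
  have e4 : I ⊔ mxR K n ^ (3 + 1) = I := sup_eq_left.2 hm4
  rw [e4] at h3
  have hfin : Module.Finite K (MvPowerSeries (Fin n) K ⧸ I) :=
    Module.finite_of_finrank_pos (by omega)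
  have hf : ∀ k, Module.Finite K (MvPowerSeries (Fin n) K ⧸ (I ⊔ mxR K n ^ k)) := fun k =>
    Module.Finite.of_surjective _ (factor_surj (le_sup_left : I ≤ I ⊔ mxR K n ^ k))
  have mono : ∀ k, Module.finrank K (MvPowerSeries (Fin n) K ⧸ (I ⊔ mxR K n ^ k)) ≤
      Module.finrank K (MvPowerSeries (Fin n) K ⧸ (I ⊔ mxR K n ^ (k + 1))) := fun k => by
    have := hf (k + 1)
    exact finrank_factor (sup_le_sup_left (Ideal.pow_le_pow_right (Nat.le_succ k)) I)
  have m0 := mono 0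
  have m1 := mono 1
  have m2 := mono 2
  have z : Module.finrank K (MvPowerSeries (Fin n) K ⧸ (I ⊔ mxR K n ^ 0)) = 0 := by
    have : I ⊔ mxR K n ^ 0 = ⊤ := by simp
    rw [this]
    have : Subsingleton (MvPowerSeries (Fin n) K ⧸ (⊤ : Ideal (MvPowerSeries (Fin n) K))) :=
      Ideal.Quotient.subsingleton_iff.2 rfl
    exact Module.finrank_zero_of_subsingleton
  simp only [Nat.reduceAdd] at *
  refine ⟨hfin, by omega, by omega⟩

lemma I_le (I : Ideal (MvPowerSeries (Fin n) K))
    (hfin : Module.Finite K (MvPowerSeries (Fin n) K ⧸ I))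
    (h : Module.finrank K (MvPowerSeries (Fin n) K ⧸ (I ⊔ mxR K n ^ 2)) = n + 1) :
    I ≤ mxR K n ^ 2 := by
  let J := I ⊔ mxR K n ^ 2
  have : Module.Finite K (MvPowerSeries (Fin n) K ⧸ J) :=
    Module.Finite.of_surjective _ (factor_surj (le_sup_left : I ≤ J))
  let L : (K × (Fin n → K)) →ₗ[K] MvPowerSeries (Fin n) K :=
    LinearMap.coprod (LinearMap.toSpanSingleton K _ 1) (Fintype.linearCombination K X)
  have hL : ∀ p, L p = p.1 • 1 + ∑ i, p.2 i • X i := fun p => by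
    simp [L, Fintype.linearCombination_apply]
  have key : ∀ f : MvPowerSeries (Fin n) K, ∃ p, f - L p ∈ mxR K n ^ 2 ∧
      (p = 0 → f ∈ mxR K n ^ 2) := by
    intro f
    obtain ⟨g, -, hf⟩ := split_vars (f - C (constantCoeff f)) (by simp)
    have hm : f - L (constantCoeff f, fun i => constantCoeff (g i)) ∈ mxR K n ^ 2 := by
      have : f - L (constantCoeff f, fun i => constantCoeff (g i)) =
          ∑ i, X i * (g i - C (constantCoeff (g i))) := by
        simp only [mul_sub, Finset.sum_sub_distrib, ← hf, hL, smul_eq_C_mul, mul_one]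
        rw [← sub_sub]
        congr 1
        exact Finset.sum_congr rfl fun i _ => mul_comm _ _
      rw [this, pow_two]
      exact Ideal.sum_mem _ fun i _ => Ideal.mul_mem_mul (X_mem_mxR i) (sub_C_mem _)
    refine ⟨_, hm, fun h0 => ?_⟩
    rw [h0] at hm
    simpa using hm
  let Q : (K × (Fin n → K)) →ₗ[K] (MvPowerSeries (Fin n) K ⧸ J) :=
    (Ideal.Quotient.mkₐ K J).toLinearMap ∘ₗ L
  have hQ : ∀ p, Q p = Ideal.Quotient.mk J (L p) := fun p => rfl
  have hsurj : Function.Surjective Q := by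
    intro y
    obtain ⟨f, rfl⟩ := Ideal.Quotient.mk_surjective y
    obtain ⟨p, hp, -⟩ := key f
    refine ⟨p, ?_⟩
    rw [hQ]
    exact (Ideal.Quotient.eq.2 ((le_sup_right : mxR K n ^ 2 ≤ J) hp)).symm
  have hinj : Function.Injective Q := by
    refine (LinearMap.injective_iff_surjective_of_finrank_eq_finrank ?_).2 hsurj
    rw [h]
    simp [add_comm]
  intro f hf
  obtain ⟨p, hp, hp0⟩ := key f
  apply hp0
  apply hinj
  rw [map_zero, hQ, ← Ideal.Quotient.eq.2 ((le_sup_right : mxR K n ^ 2 ≤ J) hp)]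
  exact Ideal.Quotient.eq_zero_iff_mem.2 ((le_sup_left : I ≤ J) hf)

lemma soc_mem (I : Ideal (MvPowerSeries (Fin n) K)) (f : MvPowerSeries (Fin n) K)
    (h : ∀ j, X j * f ∈ I) :
    Ideal.Quotient.mk I f ∈ (Submodule.colon (⊥ : Ideal (MvPowerSeries (Fin n) K ⧸ I))
      ((mxR K n).map (Ideal.Quotient.mk I))) := by
  rw [Submodule.mem_colon]
  intro s hs
  obtain ⟨t, ht, rfl⟩ := (Ideal.mem_map_iff_of_surjective _ Ideal.Quotient.mk_surjective).1 hs
  obtain ⟨g, -, hg⟩ := split_vars t (by simpa [mxR, RingHom.mem_ker] using ht)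
  rw [Submodule.mem_bot, smul_eq_mul, ← map_mul, Ideal.Quotient.eq_zero_iff_mem, hg,
    Finset.mul_sum]
  refine Ideal.sum_mem _ fun i _ => ?_
  have : f * (X i * g i) = (X i * f) * g i := by ring
  rw [this]
  exact Ideal.mul_mem_right _ _ (h i)

lemma exists_phi (I : Ideal (MvPowerSeries (Fin n) K))
    (hfin : Module.Finite K (MvPowerSeries (Fin n) K ⧸ I))
    (hd2 : Module.finrank K (MvPowerSeries (Fin n) K ⧸ (I ⊔ mxR K n ^ 2)) = n + 1)
    (hd : Module.finrank K (MvPowerSeries (Fin n) K ⧸ I) = 2 * n + 2)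
    (hm4 : mxR K n ^ 4 ≤ I) (hGor : socDimQ I = 1) :
    ∃ φ : MvPowerSeries (Fin n) K →ₗ[K] K, (∀ f ∈ I, φ f = 0) ∧
      (∀ f ∈ mxR K n ^ 3, φ f = 0 → f ∈ I) ∧
      ∀ c : Fin n → K, ∃ Z ∈ mxR K n ^ 2, ∀ j, φ (X j * Z) = c j := by
  unfold socDimQ at hGor
  set S := ((Submodule.colon (⊥ : Ideal (MvPowerSeries (Fin n) K ⧸ I))
      ((mxR K n).map (Ideal.Quotient.mk I))).restrictScalars K) with hS
  obtain ⟨e, he0, he⟩ := finrank_eq_one_iff'.1 hGor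
  obtain ⟨φ, hφ⟩ : ∃ φ : Module.Dual K (MvPowerSeries (Fin n) K ⧸ I),
      φ (e : MvPowerSeries (Fin n) K ⧸ I) ≠ 0 := by
    by_contra hc
    push Not at hc
    exact he0 (Subtype.ext ((Module.forall_dual_apply_eq_zero_iff K _).1 hc))
  have hφS : ∀ s ∈ S, φ s = 0 → s = 0 := by
    intro s hs h
    obtain ⟨c, hc⟩ := he ⟨s, hs⟩
    have hc' : c • (e : MvPowerSeries (Fin n) K ⧸ I) = s := congrArg Subtype.val hc
    rw [← hc', map_smul, smul_eq_mul, mul_eq_zero] at h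
    rw [← hc', h.resolve_right hφ, zero_smul]
  have hcub : ∀ f ∈ mxR K n ^ 3, φ (Ideal.Quotient.mk I f) = 0 → f ∈ I := by
    intro f hf h
    apply Ideal.Quotient.eq_zero_iff_mem.1
    refine hφS _ (soc_mem I f fun j => hm4 ?_) h
    rw [pow_succ']
    exact Ideal.mul_mem_mul (X_mem_mxR j) hf
  refine ⟨φ ∘ₗ (Ideal.Quotient.mkₐ K I).toLinearMap, ?_, hcub, ?_⟩
  · intro f hf
    change φ (Ideal.Quotient.mk I f) = 0
    rw [Ideal.Quotient.eq_zero_iff_mem.2 hf, map_zero]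
  let F := (Ideal.Quotient.factorₐ K (le_sup_left : I ≤ I ⊔ mxR K n ^ 2)).toLinearMap
  have hFmem : ∀ z ∈ LinearMap.ker F, ∃ Z ∈ mxR K n ^ 2, Ideal.Quotient.mk I Z = z := by
    intro z hz
    obtain ⟨f, rfl⟩ := Ideal.Quotient.mk_surjective z
    have hz' : Ideal.Quotient.mk (I ⊔ mxR K n ^ 2) f = 0 := hz
    rw [Ideal.Quotient.eq_zero_iff_mem] at hz'
    obtain ⟨a, ha, b, hb, hab⟩ := Submodule.mem_sup.1 hz'
    refine ⟨b, hb, ?_⟩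
    rw [← hab, map_add, Ideal.Quotient.eq_zero_iff_mem.2 ha, zero_add]
  let T0 : (MvPowerSeries (Fin n) K ⧸ I) →ₗ[K] (Fin n → K) :=
    LinearMap.pi fun j => φ ∘ₗ LinearMap.mulLeft K (Ideal.Quotient.mk I (X j))
  let T : LinearMap.ker F →ₗ[K] (Fin n → K) := T0 ∘ₗ (LinearMap.ker F).subtype
  have hkerF : Module.finrank K (LinearMap.ker F) = n + 1 := by
    have h := LinearMap.finrank_range_add_finrank_ker F
    rw [LinearMap.range_eq_top.2 (factor_surj _), finrank_top, hd2, hd] at h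
    omega
  have hkerT : Module.finrank K (LinearMap.ker T) ≤ 1 := by
    rw [← hGor, ← LinearEquiv.finrank_eq (Submodule.equivMapOfInjective (LinearMap.ker F).subtype
      (Submodule.injective_subtype _) (LinearMap.ker T)).symm]
    apply Submodule.finrank_mono
    rintro _ ⟨⟨z, hz⟩, hzT, rfl⟩
    obtain ⟨Z, hZ, rfl⟩ := hFmem z hz
    refine soc_mem I Z fun j => hcub _ ?_ ?_
    · rw [pow_succ']
      exact Ideal.mul_mem_mul (X_mem_mxR j) hZ
    · rw [map_mul]
      exact congrFun (show T ⟨_, hz⟩ = 0 from hzT) j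
  have hTs : Function.Surjective T := by
    rw [← LinearMap.range_eq_top]
    apply Submodule.eq_top_of_finrank_eq
    have h := LinearMap.finrank_range_add_finrank_ker T
    have h' := Submodule.finrank_le (LinearMap.range T)
    rw [Module.finrank_fin_fun] at *
    omega
  intro c
  obtain ⟨⟨z, hz⟩, hT⟩ := hTs c
  obtain ⟨Z, hZ, rfl⟩ := hFmem z hz
  refine ⟨Z, hZ, fun j => ?_⟩
  rw [← hT]
  change φ (Ideal.Quotient.mk I (X j * Z)) = φ (Ideal.Quotient.mk I (X j) * Ideal.Quotient.mk I Z)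
  rw [map_mul]

/-- homogeneous component -/
noncomputable def hcomp (d : ℕ) (f : MvPowerSeries (Fin n) K) : MvPowerSeries (Fin n) K :=
  fun α => if degM α = d then coeff α f else 0

lemma coeff_hcomp (d : ℕ) (f : MvPowerSeries (Fin n) K) (α : Fin n →₀ ℕ) :
    coeff α (hcomp d f) = if degM α = d then coeff α f else 0 := rfl

lemma sub_mem_of_hcomp {d : ℕ} {f g : MvPowerSeries (Fin n) K} (hf : f ∈ mxR K n ^ d)
    (hg : ∀ α, coeff α g = if degM α = d then coeff α f else 0) :
    f - g ∈ mxR K n ^ (d + 1) := by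
  rw [mem_pow_iff] at *
  intro α hα
  rw [map_sub, hg]
  split_ifs with h
  · simp
  · rw [hf α (by omega), sub_zero]

lemma hcomp_mem {I : Ideal (MvPowerSeries (Fin n) K)} {d : ℕ} {f : MvPowerSeries (Fin n) K}
    (hI : f ∈ I) (hf : f ∈ mxR K n ^ d) : hcomp d f ∈ initialIdeal I :=
  Ideal.subset_span ⟨f, hI, d, (mem_pow_iff d f).1 hf, coeff_hcomp d f⟩

open Pointwise in
lemma pow_le_initial (d : ℕ) (I : Ideal (MvPowerSeries (Fin n) K)) (h : mxR K n ^ d ≤ I) :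
    mxR K n ^ d ≤ initialIdeal I := by
  classical
  have hM : mxR K n = Ideal.span (Set.range X) := by
    apply le_antisymm
    · intro f hf
      obtain ⟨g, -, hg⟩ := split_vars f (by simpa [mxR, RingHom.mem_ker] using hf)
      rw [hg]
      exact Ideal.sum_mem _ fun i _ => Ideal.mul_mem_right _ _ (Ideal.subset_span ⟨i, rfl⟩)
    · rw [Ideal.span_le]
      rintro _ ⟨i, rfl⟩
      exact X_mem_mxR i
  have mono : ∀ d, ∀ f ∈ (Set.range (X : Fin n → MvPowerSeries (Fin n) K)) ^ d,
      ∃ β, degM β = d ∧ f = monomial β 1 := by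
    intro d
    induction d with
    | zero => intro f hf; exact ⟨0, by simp [degM], by simpa using hf⟩
    | succ d ih =>
      intro f hf
      rw [pow_succ] at hf
      obtain ⟨a, ha, _, ⟨i, rfl⟩, rfl⟩ := hf
      obtain ⟨β, hβ, rfl⟩ := ih a ha
      refine ⟨β + Finsupp.single i 1, by rw [degM_add, degM_single, hβ], ?_⟩
      simp [X, monomial_mul_monomial]
  have hs : mxR K n ^ d = Ideal.span (Set.range X ^ d) := by
    rw [hM, Ideal.span, Submodule.span_pow]
  rw [hs, Ideal.span_le]
  intro f hf
  have hfd : f ∈ mxR K n ^ d := by rw [hs]; exact Ideal.subset_span hf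
  obtain ⟨β, hβ, rfl⟩ := mono d f hf
  refine Ideal.subset_span ⟨_, h hfd, d, (mem_pow_iff d _).1 hfd, fun α => ?_⟩
  rw [coeff_monomial]
  split_ifs with h1 h2 <;> simp_all

end helpers

/-- **Theorem (Elias–Rossi).** Every Artinian Gorenstein local `K`-algebra
`A = R/I` (with `K` algebraically closed of characteristic zero) with Hilbert
function `{1, n, n, 1}` is canonically graded: `A` is isomorphic as a
`K`-algebra to its associated graded ring `gr_m(A) = ⊕_{i≥0} m^i/m^(i+1) = R/I^*`. -/
theorem canonically_graded_of_hilbert_1nn1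
    {K : Type*} [Field K] [IsAlgClosed K] [CharZero K] {n : ℕ}
    (I : Ideal (MvPowerSeries (Fin n) K))
    (h0 : hilbQ I 0 = 1) (h1 : hilbQ I 1 = n) (h2 : hilbQ I 2 = n) (h3 : hilbQ I 3 = 1)
    (hm4 : mxR K n ^ 4 ≤ I)
    (hGor : socDimQ I = 1) :
    Nonempty ((MvPowerSeries (Fin n) K ⧸ I) ≃ₐ[K]
      (MvPowerSeries (Fin n) K ⧸ initialIdeal I)) := by
  obtain ⟨hfin, hd2, hd⟩ := dims I h0 h1 h2 h3 hm4
  have hI2 := I_le I hfin hd2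
  obtain ⟨φ, hφI, hφ3, hφs⟩ := exists_phi I hfin hd2 hd hm4 hGor
  choose Z hZ hφZ using fun i : Fin n =>
    hφs (fun j => -(φ (MvPowerSeries.X i * MvPowerSeries.X j)) / 2)
  obtain ⟨σ, hσX, hσ⟩ := exists_sigma Z hZ
  have hyy : ∀ i j, φ (σ (MvPowerSeries.X i * MvPowerSeries.X j)) = 0 := by
    intro i j
    have hzz : φ (Z i * Z j) = 0 := by
      apply hφI
      apply hm4
      rw [show 4 = 2 + 2 from rfl, pow_add]
      exact Ideal.mul_mem_mul (hZ i) (hZ j)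
    have e : (MvPowerSeries.X i + Z i) * (MvPowerSeries.X j + Z j) =
        MvPowerSeries.X i * MvPowerSeries.X j + MvPowerSeries.X j * Z i +
          MvPowerSeries.X i * Z j + Z i * Z j := by ring
    rw [map_mul, hσX, hσX, e, map_add, map_add, map_add, hzz, hφZ, hφZ,
      mul_comm (MvPowerSeries.X j) (MvPowerSeries.X i)]
    ring
  -- the kernel contains the initial ideal
  have hker : ∀ g ∈ initialIdeal I, σ g ∈ I := by
    intro g hg
    have hle : initialIdeal I ≤ I.comap σ.toRingHom := by
      unfold initialIdeal
      rw [Ideal.span_le]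
      rintro g ⟨f, hfI, d, hfd, hgf⟩
      change σ g ∈ I
      rw [← mem_pow_iff] at hfd
      have hfg := sub_mem_of_hcomp hfd hgf
      have hgd : g ∈ mxR K n ^ d := by
        have := Ideal.sub_mem _ hfd (Ideal.pow_le_pow_right (Nat.le_succ d) hfg)
        simpa using this
      have hsg := hσ d g hgd
      have hsI : ∀ k, 4 ≤ k → ∀ x ∈ mxR K n ^ k, x ∈ I := fun k hk x hx =>
        hm4 (Ideal.pow_le_pow_right hk hx)
      by_cases hd3 : 3 ≤ d
      · have a1 := hsI _ (by omega) _ hsg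
        have a2 := hsI _ (by omega) _ hfg
        have := Ideal.add_mem _ a1 (Ideal.sub_mem _ hfI a2)
        simpa using this
      by_cases hd2 : d = 2
      · subst hd2
        obtain ⟨c, hc⟩ := quad_form g (fun α hα => by rw [hgf, if_neg hα])
        have hφg : φ (σ g) = 0 := by
          rw [hc]
          simp only [map_sum, map_smul, hyy, smul_zero, Finset.sum_const_zero]
        -- σ g = f + (element of M^3)
        have hr : σ g - f ∈ mxR K n ^ 3 := by
          have := Ideal.sub_mem _ hsg hfg
          simpa using this
        have h3 := hφ3 _ hr (by rw [map_sub, hφg, hφI f hfI, sub_zero])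
        have := Ideal.add_mem _ h3 hfI
        simpa using this
      · have hg0 : g = 0 := by
          ext α
          rw [hgf]
          split_ifs with h
          · exact (mem_pow_iff 2 f).1 (hI2 hfI) α (by omega)
          · simp
        rw [hg0, map_zero]
        exact I.zero_mem
    exact hle hg
  have hM4 := pow_le_initial 4 I hm4
  -- the kernel is contained in the initial ideal
  have hker' : ∀ k d, d + k = 4 → ∀ f ∈ mxR K n ^ d, σ f ∈ I → f ∈ initialIdeal I := by
    intro k
    induction k with
    | zero =>
      intro d hd f hf _
      obtain rfl : d = 4 := by omega
      exact hM4 hf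
    | succ k ih =>
      intro d hd f hf hσf
      have h1 : σ f - (σ f - f) = f := by ring
      -- h = σ f ∈ I, f - h ∈ M^(d+1)
      have hh : σ f ∈ mxR K n ^ d := by
        have := Ideal.add_mem _ (Ideal.pow_le_pow_right (Nat.le_succ d) (hσ d f hf)) hf
        simpa using this
      have hc := hcomp_mem hσf hh
      have h2 := sub_mem_of_hcomp hh (coeff_hcomp d (σ f))
      have h3 : f - hcomp d (σ f) ∈ mxR K n ^ (d + 1) := by
        have := Ideal.sub_mem _ h2 (hσ d f hf)
        simpa using this
      have h4 := ih (d + 1) (by omega) _ h3 (by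
        rw [map_sub]; exact Ideal.sub_mem _ hσf (hker _ hc))
      have := Ideal.add_mem _ h4 hc
      simpa using this
  -- surjectivity
  have hsurj : ∀ k d, d + k = 4 → ∀ f ∈ mxR K n ^ d, ∃ g, f - σ g ∈ I := by
    intro k
    induction k with
    | zero =>
      intro d hd f hf
      obtain rfl : d = 4 := by omega
      exact ⟨0, by simpa using hm4 hf⟩
    | succ k ih =>
      intro d hd f hf
      obtain ⟨g, hg⟩ := ih (d + 1) (by omega) _ (Ideal.neg_mem_iff _ |>.2 (hσ d f hf))
      refine ⟨f + g, ?_⟩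
      rw [map_add]
      have : f - (σ f + σ g) = -(σ f - f) - σ g := by ring
      rw [this]
      exact hg
  let ψ : (MvPowerSeries (Fin n) K ⧸ initialIdeal I) →ₐ[K] (MvPowerSeries (Fin n) K ⧸ I) :=
    Ideal.Quotient.liftₐ (initialIdeal I) ((Ideal.Quotient.mkₐ K I).comp σ) (fun g hg =>
      Ideal.Quotient.eq_zero_iff_mem.2 (hker g hg))
  have hψ : ∀ f, ψ (Ideal.Quotient.mk _ f) = Ideal.Quotient.mk I (σ f) := fun f => rfl
  refine ⟨(AlgEquiv.ofBijective ψ ⟨?_, ?_⟩).symm⟩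
  · rw [injective_iff_map_eq_zero]
    intro x hx
    obtain ⟨f, rfl⟩ := Ideal.Quotient.mk_surjective x
    rw [hψ, Ideal.Quotient.eq_zero_iff_mem] at hx
    exact Ideal.Quotient.eq_zero_iff_mem.2 (hker' 4 0 rfl f (by simp) hx)
  · intro y
    obtain ⟨f, rfl⟩ := Ideal.Quotient.mk_surjective y
    obtain ⟨g, hg⟩ := hsurj 4 0 rfl f (by simp)
    exact ⟨Ideal.Quotient.mk _ g, by rw [hψ]; exact (Ideal.Quotient.eq.2 hg).symm⟩
end

section
/- Let F_3 ∈ K[y_1,…,y_n] be a non-degenerate homogeneous form of degree three and let F_2 ∈ K[y_1,…,y_n] be any homogeneous form of degree two. Then the Artinian Gorenstein local K-algebras A_{F_3 + F_2} and A_{F_3} are isomorphic as K-algebras. -/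
/-- The contraction (derivative) action of the power series ring
`R = K[[x_1,…,x_n]]` on the polynomial ring `P = K[y_1,…,y_n]`:
`f ∘ g = f(∂/∂y_1, …, ∂/∂y_n)(g)`.  It is defined on the monomial basis by
`x^α ∘ y^β = (∏ i, (β i)!/(β i - α i)!) y^(β-α)` (zero unless `α ≤ β`), the honest
iterated partial derivative, and extended `K`-linearly. -/
noncomputable def contract {K : Type*} [Field K] {n : ℕ} (f : MvPowerSeries (Fin n) K) :
    MvPolynomial (Fin n) K →ₗ[K] MvPolynomial (Fin n) K :=
  (MvPolynomial.basisMonomials (Fin n) K).constr K fun β =>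
    ∑ α ∈ Finset.Iic β,
      (MvPowerSeries.coeff α f * ∏ i, ((β i).descFactorial (α i) : K)) •
        MvPolynomial.monomial (β - α) (1 : K)

theorem contract_add {K : Type*} [Field K] {n : ℕ} (f g : MvPowerSeries (Fin n) K) :
    contract (f + g) = contract f + contract g := by
  unfold contract
  rw [← map_add]
  congr 1
  funext β
  simp only [Pi.add_apply]
  rw [← Finset.sum_add_distrib]
  exact Finset.sum_congr rfl fun α _ => by rw [map_add, add_mul, add_smul]

theorem contract_zero {K : Type*} [Field K] {n : ℕ} :
    contract (0 : MvPowerSeries (Fin n) K) = 0 := by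
  unfold contract
  convert map_zero ((MvPolynomial.basisMonomials (Fin n) K).constr
    (M' := MvPolynomial (Fin n) K) K) using 2
  funext β
  simp

/-- The annihilator `Ann_R(F) = Ann_R(⟨F⟩_R)` of (the cyclic `R`-submodule of
`P` generated by) a polynomial `F` under the contraction action; an ideal of
`R = K[[x_1,…,x_n]]`.  The Artinian Gorenstein local algebra associated to `F`
is `A_F = R ⧸ annR F`. -/
noncomputable def annR {K : Type*} [Field K] {n : ℕ} (F : MvPolynomial (Fin n) K) :
    Ideal (MvPowerSeries (Fin n) K) where
  carrier := {f | ∀ u : MvPowerSeries (Fin n) K, contract (u * f) F = 0}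
  zero_mem' := fun u => by rw [mul_zero, contract_zero]; rfl
  add_mem' := fun {a b} ha hb u => by
    rw [mul_add, contract_add, LinearMap.add_apply, ha u, hb u, add_zero]
  smul_mem' := fun c f hf u => by
    rw [smul_eq_mul, ← mul_assoc]; exact hf (u * c)

/-- The linear form `l 1 • x_1 + ⋯ + l n • x_n` in `R = K[[x_1,…,x_n]]`. -/
noncomputable def linForm {K : Type*} [Field K] {n : ℕ} (l : Fin n → K) :
    MvPowerSeries (Fin n) K :=
  ∑ i, MvPowerSeries.monomial (Finsupp.single i 1) (l i)

/-- A polynomial `F ∈ K[y_1,…,y_n]` is non-degenerate if `Ann_R(F)` contains no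
nonzero linear form; equivalently, the embedding dimension of `A_F` is `n`,
i.e. `HF_{A_F}(1) = n`. -/
def nondegenerate {K : Type*} [Field K] {n : ℕ} (F : MvPolynomial (Fin n) K) : Prop :=
  ∀ l : Fin n → K, linForm l ∈ annR F → l = 0

namespace CubicIso

open MvPolynomial

variable {K : Type*} [Field K] {n : ℕ}

/-- The factorial of a multi-index. -/
def mfac (β : Fin n →₀ ℕ) : ℕ := ∏ i, (β i).factorial

/-- The pairing `(F, g) ↦ (g ∘ F)(0)`. -/
noncomputable def Phi : MvPolynomial (Fin n) K →ₗ[K] (MvPowerSeries (Fin n) K →ₗ[K] K) :=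
  (MvPolynomial.basisMonomials (Fin n) K).constr K fun β =>
    (mfac β : K) • (MvPowerSeries.coeff β)

theorem Phi_monomial (β : Fin n →₀ ℕ) (g : MvPowerSeries (Fin n) K) :
    Phi (monomial β (1 : K)) g = (mfac β : K) * MvPowerSeries.coeff β g := by
  have := (MvPolynomial.basisMonomials (Fin n) K).constr_basis K (fun β =>
    (mfac β : K) • (MvPowerSeries.coeff (R := K) β)) β
  rw [MvPolynomial.coe_basisMonomials] at this
  rw [Phi, this]; simp

theorem contract_monomial (f : MvPowerSeries (Fin n) K) (β : Fin n →₀ ℕ) :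
    contract f (monomial β (1 : K)) = ∑ α ∈ Finset.Iic β,
      (MvPowerSeries.coeff α f * ∏ i, ((β i).descFactorial (α i) : K)) •
        MvPolynomial.monomial (β - α) (1 : K) := by
  have := (MvPolynomial.basisMonomials (Fin n) K).constr_basis K (fun β =>
    ∑ α ∈ Finset.Iic β,
      (MvPowerSeries.coeff α f * ∏ i, ((β i).descFactorial (α i) : K)) •
        MvPolynomial.monomial (β - α) (1 : K)) β
  rw [MvPolynomial.coe_basisMonomials] at this
  rw [contract, this]

theorem Phi_eq_zero (F : MvPolynomial (Fin n) K) (g : MvPowerSeries (Fin n) K)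
    (h : ∀ β, coeff β F ≠ 0 → MvPowerSeries.coeff β g = 0) : Phi F g = 0 := by
  rw [F.as_sum, map_sum, LinearMap.sum_apply]
  refine Finset.sum_eq_zero fun β hβ => ?_
  have : monomial β (coeff β F) = coeff β F • monomial β (1 : K) := by
    rw [smul_monomial]; simp
  rw [this, map_smul, LinearMap.smul_apply, Phi_monomial, h β (mem_support_iff.mp hβ)]
  simp

theorem key (γ : Fin n →₀ ℕ) (g : MvPowerSeries (Fin n) K) (F : MvPolynomial (Fin n) K) :
    (mfac γ : K) * coeff γ (contract g F) = Phi F (MvPowerSeries.monomial γ 1 * g) := by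
  classical
  rw [F.as_sum, map_sum, map_sum, LinearMap.sum_apply, coeff_sum, Finset.mul_sum]
  refine Finset.sum_congr rfl fun β hβ => ?_
  have : monomial β (coeff β F) = coeff β F • monomial β (1 : K) := by
    rw [smul_monomial]; simp
  rw [this, map_smul, map_smul, LinearMap.smul_apply, Phi_monomial, contract_monomial,
    coeff_smul, smul_eq_mul, smul_eq_mul, mul_left_comm]
  congr 1
  rw [coeff_sum, MvPowerSeries.coeff_monomial_mul]
  simp only [coeff_smul, coeff_monomial, smul_eq_mul]
  split_ifs with h
  · rw [Finset.sum_eq_single (β - γ)]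
    · rw [if_pos (tsub_tsub_cancel_of_le h)]
      have : mfac β = mfac γ * ∏ i, (β i).descFactorial ((β - γ) i) := by
        unfold mfac
        rw [← Finset.prod_mul_distrib]
        refine Finset.prod_congr rfl fun i _ => ?_
        have hi := h i
        have := Nat.factorial_mul_descFactorial (n := β i) (k := (β - γ) i) (by simp)
        rw [← this]
        congr 2
        simp; omega
      rw [this]; push_cast; ring
    · intro b hb hne
      rw [if_neg, mul_zero]
      intro h2
      apply hne
      rw [← h2, tsub_tsub_cancel_of_le (Finset.mem_Iic.mp hb)]
    · intro h2
      exact absurd (Finset.mem_Iic.mpr tsub_le_self) h2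
  · rw [Finset.sum_eq_zero, mul_zero, mul_zero]
    intro α _
    rw [if_neg, mul_zero]
    rintro rfl
    exact h tsub_le_self

theorem mfac_ne_zero [CharZero K] (γ : Fin n →₀ ℕ) : (mfac γ : K) ≠ 0 :=
  Nat.cast_ne_zero.mpr (Finset.prod_ne_zero_iff.mpr fun _ _ => Nat.factorial_ne_zero _)

theorem mem_annR [CharZero K] (F : MvPolynomial (Fin n) K) (f : MvPowerSeries (Fin n) K) :
    f ∈ annR F ↔ ∀ u, Phi F (u * f) = 0 := by
  constructor
  · intro h u
    have h1 : contract (u * f) F = 0 := h u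
    have := key 0 (u * f) F
    rw [h1, coeff_zero, mul_zero] at this
    rw [this]
    congr 1
    exact (one_mul _).symm
  · intro h u
    change contract (u * f) F = 0
    ext γ
    have := key γ (u * f) F
    rw [← mul_assoc, h] at this
    rw [coeff_zero]
    exact (mul_eq_zero.mp this).resolve_left (mfac_ne_zero γ)

theorem Phi_low (F : MvPolynomial (Fin n) K) (hF : ∀ β, coeff β F ≠ 0 → β.degree < 4)
    (v p : MvPowerSeries (Fin n) K)
    (hv : ∀ β, Finsupp.degree β < 4 → MvPowerSeries.coeff β v = 0) : Phi F (v * p) = 0 := by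
  classical
  refine Phi_eq_zero _ _ fun β hβ => ?_
  rw [MvPowerSeries.coeff_mul]
  refine Finset.sum_eq_zero fun ⟨a, b⟩ hab => ?_
  rw [Finset.HasAntidiagonal.mem_antidiagonal] at hab
  dsimp only at hab ⊢
  rw [hv, zero_mul]
  have := hF β hβ
  rw [← hab, map_add] at this
  omega

theorem trunc_low (u : MvPowerSeries (Fin n) K) (β : Fin n →₀ ℕ) (hβ : β.degree < 4) :
    MvPowerSeries.coeff β (u - ((MvPowerSeries.truncTotal 4 u : MvPolynomial (Fin n) K) :
      MvPowerSeries (Fin n) K)) = 0 := by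
  rw [map_sub, MvPolynomial.coeff_coe, MvPowerSeries.coeff_truncTotal _ hβ, sub_self]

theorem mem_annR' [CharZero K] (F : MvPolynomial (Fin n) K)
    (hF : ∀ β, coeff β F ≠ 0 → β.degree < 4) (p : MvPolynomial (Fin n) K) :
    (p : MvPowerSeries (Fin n) K) ∈ annR F ↔ ∀ q : MvPolynomial (Fin n) K,
      Phi F ((q * p : MvPolynomial (Fin n) K) : MvPowerSeries (Fin n) K) = 0 := by
  rw [mem_annR]
  constructor
  · intro h q
    rw [MvPolynomial.coe_mul]; exact h q
  · intro h u
    have h1 := Phi_low F hF _ p (trunc_low u)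
    rw [sub_mul, map_sub, ← MvPolynomial.coe_mul, h, sub_zero] at h1
    exact h1

/-- The map from the polynomial ring to `A_F`. -/
noncomputable def pr (F : MvPolynomial (Fin n) K) :
    MvPolynomial (Fin n) K →ₐ[K] (MvPowerSeries (Fin n) K ⧸ annR F) :=
  (Ideal.Quotient.mkₐ K (annR F)).comp (MvPolynomial.coeToMvPowerSeries.algHom K)

theorem pr_eq_zero (F p : MvPolynomial (Fin n) K) :
    pr F p = 0 ↔ (p : MvPowerSeries (Fin n) K) ∈ annR F := by
  simp [pr, Ideal.Quotient.eq_zero_iff_mem, Algebra.algebraMap_self, MvPowerSeries.map_id]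

theorem pr_surj [CharZero K] (F : MvPolynomial (Fin n) K)
    (hF : ∀ β, coeff β F ≠ 0 → β.degree < 4) : Function.Surjective (pr F) := by
  intro a
  obtain ⟨u, rfl⟩ := Ideal.Quotient.mk_surjective a
  refine ⟨MvPowerSeries.truncTotal 4 u, ?_⟩
  symm
  simp only [pr, AlgHom.comp_apply, Ideal.Quotient.mkₐ_eq_mk]
  rw [Ideal.Quotient.eq, mem_annR]
  intro v
  rw [mul_comm]
  apply Phi_low F hF
  simpa [Algebra.algebraMap_self, MvPowerSeries.map_id] using trunc_low u

/-- The functional restricted to polynomials. -/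
noncomputable def Ph (F : MvPolynomial (Fin n) K) : MvPolynomial (Fin n) K →ₗ[K] K where
  toFun p := Phi F (p : MvPowerSeries (Fin n) K)
  map_add' p q := by rw [MvPolynomial.coe_add, map_add]
  map_smul' a p := by rw [MvPolynomial.coe_smul, map_smul]; rfl

theorem Ph_eq_zero (F p : MvPolynomial (Fin n) K)
    (h : ∀ β, coeff β F ≠ 0 → coeff β p = 0) : Ph F p = 0 :=
  Phi_eq_zero _ _ fun β hβ => by rw [MvPolynomial.coeff_coe]; exact h β hβ

theorem Ph_hom (F p : MvPolynomial (Fin n) K) (d e : ℕ) (hF : F.IsHomogeneous d)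
    (hp : p.IsHomogeneous e) (hde : d ≠ e) : Ph F p = 0 :=
  Ph_eq_zero _ _ fun β hβ => by
    by_contra h
    apply hβ
    apply hF.coeff_eq_zero
    intro h2
    exact h (hp.coeff_eq_zero (by omega))

theorem Ph_pow (F p : MvPolynomial (Fin n) K) (hF : ∀ β, coeff β F ≠ 0 → β.degree < 4)
    (hp : p ∈ idealOfVars (Fin n) K ^ 4) : Ph F p = 0 :=
  Ph_eq_zero _ _ fun β hβ => (mem_pow_idealOfVars_iff' 4 p).mp hp β (hF β hβ)

/-- Linear functionals killing products of at most three variables and the fourth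
power of the maximal ideal vanish. -/
theorem ext4 (L : MvPolynomial (Fin n) K →ₗ[K] K) (h0 : L 1 = 0) (h1 : ∀ i, L (X i) = 0)
    (h2 : ∀ i j, L (X i * X j) = 0) (h3 : ∀ i j k, L (X i * X j * X k) = 0)
    (h4 : ∀ p ∈ idealOfVars (Fin n) K ^ 4, L p = 0) (p : MvPolynomial (Fin n) K) : L p = 0 := by
  have hm : ∀ β : Fin n →₀ ℕ, β = 0 ∨ ∃ i γ, monomial β (1 : K) = X i * monomial γ 1 := by
    intro β
    by_cases h : β = 0
    · exact Or.inl h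
    · right
      obtain ⟨i, hi⟩ : ∃ i, β i ≠ 0 := by
        by_contra! hh; exact h (Finsupp.ext hh)
      refine ⟨i, β - Finsupp.single i 1, ?_⟩
      have : Finsupp.single i 1 ≤ β := by
        rw [Finsupp.single_le_iff]; omega
      rw [X, monomial_mul, add_tsub_cancel_of_le this, one_mul]
  have hX : ∀ i, (X i : MvPolynomial (Fin n) K) ∈ idealOfVars (Fin n) K :=
    fun i => Ideal.subset_span ⟨i, rfl⟩
  have hmon : ∀ β, L (monomial β (1 : K)) = 0 := by
    intro β
    obtain rfl | ⟨i, γ, h⟩ := hm β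
    · exact h0
    rw [h]
    obtain rfl | ⟨j, γ, h⟩ := hm γ
    · simpa using h1 i
    rw [h]
    obtain rfl | ⟨k, γ, h⟩ := hm γ
    · simpa using h2 i j
    rw [h]
    obtain rfl | ⟨l, γ, h⟩ := hm γ
    · simpa [mul_assoc] using h3 i j k
    rw [h]
    apply h4
    have : X i * (X j * (X k * (X l * monomial γ (1 : K))))
      = (X i * X j * X k * X l) * monomial γ 1 := by ring
    rw [this]
    apply Ideal.mul_mem_right
    rw [pow_succ, pow_succ, pow_two]
    exact Ideal.mul_mem_mul (Ideal.mul_mem_mul (Ideal.mul_mem_mul (hX i) (hX j)) (hX k)) (hX l)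
  have : L = 0 := (basisMonomials (Fin n) K).ext fun β => by
    simpa using hmon β
  rw [this]; rfl

theorem linForm_eq (l : Fin n → K) :
    linForm l = ((∑ i, l i • X i : MvPolynomial (Fin n) K) : MvPowerSeries (Fin n) K) := by
  have : ((∑ i, l i • X i : MvPolynomial (Fin n) K) : MvPowerSeries (Fin n) K)
    = ∑ i, ((l i • X i : MvPolynomial (Fin n) K) : MvPowerSeries (Fin n) K) :=
    map_sum (MvPolynomial.coeToMvPowerSeries.ringHom (σ := Fin n) (R := K)) _ _
  rw [this]
  refine Finset.sum_congr rfl fun i _ => ?_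
  rw [X, smul_monomial, MvPolynomial.coe_monomial]
  simp

theorem exists_q [CharZero K] (F : MvPolynomial (Fin n) K) (hF : F.IsHomogeneous 3)
    (hnd : nondegenerate F) (t : Fin n → K) :
    ∃ c : Fin n × Fin n → K, ∀ i, ∑ ab, c ab * Ph F (X i * X ab.1 * X ab.2) = t i := by
  have hF' : ∀ β, coeff β F ≠ 0 → β.degree < 4 := fun β hβ => by
    by_contra h
    exact hβ (hF.coeff_eq_zero (by omega))
  let L : (Fin n × Fin n → K) →ₗ[K] (Fin n → K) :=
    { toFun := fun c i => ∑ ab, c ab * Ph F (X i * X ab.1 * X ab.2)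
      map_add' := fun c d => by
        ext i; simp [add_mul, Finset.sum_add_distrib]
      map_smul' := fun a c => by
        ext i; simp [Finset.mul_sum, mul_assoc] }
  have hL : Function.Surjective L := by
    rw [← LinearMap.dualMap_injective_iff, injective_iff_map_eq_zero]
    intro φ hφ
    have hφ2 : ∀ w, φ w = ∑ i, w i * φ (Pi.single i 1) := by
      intro w
      conv_lhs => rw [pi_eq_sum_univ' w]
      simp [map_sum]
    have hl : (fun i => φ (Pi.single i 1)) = 0 := by
      apply hnd
      rw [linForm_eq, mem_annR' F hF']
      intro q
      set lf : MvPolynomial (Fin n) K := ∑ i, φ (Pi.single i 1) • X i with hlf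
      have hlf1 : lf.IsHomogeneous 1 := by
        apply IsHomogeneous.sum
        intro i _
        rw [smul_eq_C_mul]
        simpa using (isHomogeneous_C (Fin n) (φ (Pi.single i 1))).mul (isHomogeneous_X K i)
      have hX := fun i => isHomogeneous_X (σ := Fin n) K i
      refine ext4 ((Ph F).comp (LinearMap.mulRight K lf)) ?_ ?_ ?_ ?_ ?_ q
      · exact Ph_hom F _ 3 1 hF (by simpa using hlf1) (by norm_num)
      · intro i
        exact Ph_hom F _ 3 2 hF (by simpa using (hX i).mul hlf1) (by norm_num)
      · intro a b
        have := congrArg (fun ψ => ψ (Pi.single (a, b) 1)) hφ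
        simp only [LinearMap.dualMap_apply, LinearMap.zero_apply] at this
        rw [hφ2] at this
        simp only [LinearMap.comp_apply, LinearMap.mulRight_apply, hlf, Finset.mul_sum, map_sum,
          mul_smul_comm, map_smul, smul_eq_mul]
        rw [← this]
        refine Finset.sum_congr rfl fun i _ => ?_
        simp [L, Pi.single_apply]
        rw [mul_comm]
        congr 2
        ring
      · intro i j k
        exact Ph_hom F _ 3 4 hF (by simpa using (((hX i).mul (hX j)).mul (hX k)).mul hlf1)
          (by norm_num)
      · intro p hp
        exact Ph_pow F _ hF' (Ideal.mul_mem_right _ _ hp)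
    ext i
    simpa using congrFun hl i
  obtain ⟨c, hc⟩ := hL t
  exact ⟨c, fun i => congrFun hc i⟩

theorem pow4 {R : Type*} [CommRing R] (m : Ideal R) {a b c : R} (ha : a ∈ m) (hb : b ∈ m)
    (hc : c ∈ m ^ 2) : a * b * c ∈ m ^ 4 := by
  have := Ideal.mul_mem_mul (Ideal.mul_mem_mul ha hb) hc
  have h : m * m * m ^ 2 = m ^ 4 := by ring
  rwa [h] at this

theorem main [CharZero K] (F3 F2 : MvPolynomial (Fin n) K)
    (hF3 : F3.IsHomogeneous 3) (hF2 : F2.IsHomogeneous 2) (hnd : nondegenerate F3) :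
    Nonempty ((MvPowerSeries (Fin n) K ⧸ annR (F3 + F2)) ≃ₐ[K]
      (MvPowerSeries (Fin n) K ⧸ annR F3)) := by
  have hd3 : ∀ β, coeff β F3 ≠ 0 → β.degree < 4 := fun β hβ => by
    by_contra h
    exact hβ (hF3.coeff_eq_zero (by omega))
  have hd : ∀ β, coeff β (F3 + F2) ≠ 0 → β.degree < 4 := fun β hβ => by
    by_contra h
    apply hβ
    rw [coeff_add, hF3.coeff_eq_zero (by omega), hF2.coeff_eq_zero (by omega), add_zero]
  choose c hc using fun j => exists_q F3 hF3 hnd (fun i => Ph F2 (X i * X j) / 2)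
  set m := idealOfVars (Fin n) K with hm
  let q : Fin n → MvPolynomial (Fin n) K := fun j => ∑ ab, c j ab • (X ab.1 * X ab.2)
  have hX := fun i => isHomogeneous_X (σ := Fin n) K i
  have hXm : ∀ i, (X i : MvPolynomial (Fin n) K) ∈ m := fun i => Ideal.subset_span ⟨i, rfl⟩
  have hqh : ∀ j, (q j).IsHomogeneous 2 := fun j => by
    apply IsHomogeneous.sum
    intro ab _
    rw [smul_eq_C_mul]
    simpa using (isHomogeneous_C (Fin n) (c j ab)).mul ((hX ab.1).mul (hX ab.2))
  have hqm2 : ∀ j, q j ∈ m ^ 2 := fun j => by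
    refine Ideal.sum_mem _ fun ab _ => ?_
    rw [smul_eq_C_mul, pow_two]
    exact Ideal.mul_mem_left _ _ (Ideal.mul_mem_mul (hXm _) (hXm _))
  have hqm : ∀ j, q j ∈ m := fun j => Ideal.pow_le_self two_ne_zero (hqm2 j)
  let y : Fin n → MvPolynomial (Fin n) K := fun j => X j + q j
  have hym : ∀ j, y j ∈ m := fun j => Ideal.add_mem _ (hXm j) (hqm j)
  have hqq : ∀ i j, q i * q j ∈ m ^ 4 := fun i j => by
    have := Ideal.mul_mem_mul (hqm2 i) (hqm2 j)
    rwa [← pow_add] at this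
  have hy3 : ∀ i j k, y i * y j * y k - X i * X j * X k ∈ m ^ 4 := fun i j k => by
    have : y i * y j * y k - X i * X j * X k =
        X i * X j * q k + X i * y k * q j + y j * y k * q i := by
      simp only [y]; ring
    rw [this]
    exact Ideal.add_mem _ (Ideal.add_mem _ (pow4 m (hXm i) (hXm j) (hqm2 k))
      (pow4 m (hXm i) (hym k) (hqm2 j))) (pow4 m (hym j) (hym k) (hqm2 i))
  let φ : MvPolynomial (Fin n) K →ₐ[K] MvPolynomial (Fin n) K := aeval y
  have hφX : ∀ i, φ (X i) = y i := fun i => aeval_X _ _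
  have hφm : ∀ p ∈ m ^ 4, φ p ∈ m ^ 4 := by
    have h1 : m ≤ m.comap φ := by
      rw [hm, Ideal.span_le]
      rintro _ ⟨i, rfl⟩
      change φ (X i) ∈ m
      rw [hφX]; exact hym i
    intro p hp
    exact Ideal.le_comap_pow φ 4 (Ideal.pow_right_mono h1 4 hp)
  have hadd : ∀ p, Ph (F3 + F2) p = Ph F3 p + Ph F2 p := fun p => by
    simp [Ph]
  have hXq : ∀ i j, Ph F3 (X i * q j) = Ph F2 (X i * X j) / 2 := fun i j => by
    rw [← hc j i]
    simp only [q, Finset.mul_sum, map_sum, mul_smul_comm, map_smul, smul_eq_mul, mul_assoc]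
  have hmain : ∀ p, Ph (F3 + F2) p = Ph F3 (φ p) := by
    intro p
    rw [← sub_eq_zero]
    refine ext4 (Ph (F3 + F2) - (Ph F3).comp φ.toLinearMap) ?_ ?_ ?_ ?_ ?_ p
    · simp only [LinearMap.sub_apply, LinearMap.comp_apply, AlgHom.toLinearMap_apply, map_one]
      rw [hadd, Ph_hom F2 1 2 0 hF2 (isHomogeneous_one _ _) (by norm_num)]
      ring
    · intro i
      simp only [LinearMap.sub_apply, LinearMap.comp_apply, AlgHom.toLinearMap_apply, hφX]
      rw [hadd, Ph_hom F2 _ 2 1 hF2 (hX i) (by norm_num), map_add,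
        Ph_hom F3 _ 3 2 hF3 (hqh i) (by norm_num)]
      ring
    · intro i j
      simp only [LinearMap.sub_apply, LinearMap.comp_apply, AlgHom.toLinearMap_apply, map_mul, hφX]
      have : y i * y j = X i * X j + X i * q j + X j * q i + q i * q j := by
        simp only [y]; ring
      rw [hadd, this, map_add, map_add, map_add, Ph_pow F3 _ hd3 (hqq i j), hXq, hXq,
        mul_comm (X j) (X i)]
      ring
    · intro i j k
      simp only [LinearMap.sub_apply, LinearMap.comp_apply, AlgHom.toLinearMap_apply, map_mul, hφX]
      have h := Ph_pow F3 _ hd3 (hy3 i j k)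
      rw [map_sub] at h
      rw [hadd, Ph_hom F2 _ 2 3 hF2 (((hX i).mul (hX j)).mul (hX k)) (by norm_num)]
      linear_combination -h
    · intro p hp
      simp only [LinearMap.sub_apply, LinearMap.comp_apply, AlgHom.toLinearMap_apply]
      rw [Ph_pow _ _ hd hp, Ph_pow _ _ hd3 (hφm p hp), sub_zero]
  have hpr4 : ∀ p ∈ m ^ 4, pr F3 p = 0 := fun p hp => by
    rw [pr_eq_zero, mem_annR' F3 hd3]
    intro r
    exact Ph_pow F3 _ hd3 (Ideal.mul_mem_left _ _ hp)
  let ψ := (pr F3).comp φ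
  have hy : ∀ i, pr F3 (y i) ∈ ψ.range := fun i => ⟨X i, by
    change pr F3 (φ (X i)) = _
    rw [hφX]⟩
  have h3 : ∀ i j k, pr F3 (X i * X j * X k) ∈ ψ.range := fun i j k => by
    have := hpr4 _ (hy3 i j k)
    rw [map_sub, sub_eq_zero] at this
    rw [← this, map_mul, map_mul]
    exact mul_mem (mul_mem (hy i) (hy j)) (hy k)
  have hXqS : ∀ i j, pr F3 (X i * q j) ∈ ψ.range := fun i j => by
    simp only [q, Finset.mul_sum, map_sum, mul_smul_comm, map_smul, ← mul_assoc]
    exact sum_mem fun ab _ => Subalgebra.smul_mem _ (h3 _ _ _) _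
  have h2 : ∀ i j, pr F3 (X i * X j) ∈ ψ.range := fun i j => by
    have : X i * X j = y i * y j - X i * q j - X j * q i - q i * q j := by
      simp only [y]; ring
    rw [this, map_sub, map_sub, map_sub, hpr4 _ (hqq i j), sub_zero, map_mul]
    exact sub_mem (sub_mem (mul_mem (hy i) (hy j)) (hXqS i j)) (hXqS j i)
  have h1 : ∀ i, pr F3 (X i) ∈ ψ.range := fun i => by
    have : X i = y i - q i := by simp only [y]; ring
    rw [this, map_sub]
    refine sub_mem (hy i) ?_
    simp only [q, map_sum, map_smul]
    exact sum_mem fun ab _ => Subalgebra.smul_mem _ (h2 _ _) _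
  have hψ' : ∀ p, pr F3 p ∈ ψ.range := fun p => by
    induction p using MvPolynomial.induction_on with
    | C a =>
      have : (C a : MvPolynomial (Fin n) K) = algebraMap K _ a := rfl
      rw [this, AlgHom.commutes]
      exact Subalgebra.algebraMap_mem _ _
    | add p r hp hr => rw [map_add]; exact add_mem hp hr
    | mul_X p i hp => rw [map_mul]; exact mul_mem hp (h1 i)
  have hψ : Function.Surjective ψ := fun a => by
    obtain ⟨p, rfl⟩ := pr_surj F3 hd3 a
    exact hψ' p
  have hker : RingHom.ker (pr (F3 + F2)) = RingHom.ker ψ := by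
    ext p
    rw [RingHom.mem_ker, RingHom.mem_ker, pr_eq_zero, mem_annR' _ hd]
    change _ ↔ pr F3 (φ p) = 0
    rw [pr_eq_zero]
    have hP : ∀ r : MvPolynomial (Fin n) K,
        Phi (F3 + F2) ((r * p : MvPolynomial (Fin n) K) : MvPowerSeries (Fin n) K)
        = Ph F3 (φ r * φ p) := fun r => by
      rw [← map_mul]; exact hmain (r * p)
    simp only [hP]
    constructor
    · intro h
      rw [mem_annR' _ hd3]
      intro r
      obtain ⟨s, hs⟩ := hψ' r
      have hs' : pr F3 (φ s - r) = 0 := by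
        rw [map_sub, sub_eq_zero]; exact hs
      rw [pr_eq_zero, mem_annR' _ hd3] at hs'
      have e1 : Ph F3 (φ p * (φ s - r)) = 0 := hs' (φ p)
      have e2 : φ p * (φ s - r) = φ s * φ p - r * φ p := by ring
      rw [e2, map_sub, h s, zero_sub, neg_eq_zero] at e1
      exact e1
    · intro h r
      rw [mem_annR' _ hd3] at h
      exact h (φ r)
  exact ⟨((Ideal.quotientKerAlgEquivOfSurjective (pr_surj (F3 + F2) hd)).symm.trans
    (Ideal.quotientEquivAlgOfEq K hker)).trans (Ideal.quotientKerAlgEquivOfSurjective hψ)⟩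

end CubicIso

/-- For a non-degenerate cubic form `F_3` and any quadratic form `F_2`, the
Artinian Gorenstein local algebras `A_{F_3 + F_2}` and `A_{F_3}` are isomorphic
as `K`-algebras. -/
theorem aF_cubic_plus_quadratic_iso
    {K : Type*} [Field K] [IsAlgClosed K] [CharZero K] {n : ℕ}
    (F3 F2 : MvPolynomial (Fin n) K)
    (hF3 : F3.IsHomogeneous 3) (hF2 : F2.IsHomogeneous 2)
    (hnd : nondegenerate F3) :
    Nonempty ((MvPowerSeries (Fin n) K ⧸ annR (F3 + F2)) ≃ₐ[K]
      (MvPowerSeries (Fin n) K ⧸ annR F3)) := by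
  exact CubicIso.main F3 F2 hF3 hF2 hnd
end

section
/- Let F, G ∈ K[y_1,…,y_n] be polynomials of degree three with top-degree (cubic) forms F_3 and G_3, such that the Artinian Gorenstein local algebras A_F and A_G both have Hilbert function {1,n,n,1}. Then A_F and A_G are isomorphic as K-algebras if and only if F_3 and G_3 are projectively equivalent, i.e. there exist an invertible linear change of coordinates φ ∈ GL_n(K) and a nonzero scalar c ∈ K with F_3 ∘ φ = c · G_3. -/
/-- Two forms `F, G ∈ K[y_1,…,y_n]` are projectively equivalent if they agree up
to an invertible linear change of coordinates `φ ∈ GL_n(K)` and a nonzero scalar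
`c`: `F ∘ φ = c • G`. -/
def projEquiv {K : Type*} [Field K] {n : ℕ} (F G : MvPolynomial (Fin n) K) : Prop :=
  ∃ φ : GL (Fin n) K, ∃ c : K, c ≠ 0 ∧
    MvPolynomial.aeval
      (fun i => ∑ j, (φ : Matrix (Fin n) (Fin n) K) i j •
        (MvPolynomial.X j : MvPolynomial (Fin n) K)) F = c • G

open MvPolynomial in
theorem aux_equiv_of_ker {K P A B : Type*} [Field K] [CommRing P] [Algebra K P] [CommRing A]
    [Algebra K A] [CommRing B] [Algebra K B] [FiniteDimensional K A] [FiniteDimensional K B]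
    (θ : P →ₐ[K] A) (η : P →ₐ[K] B) (hη : Function.Surjective η)
    (hk : RingHom.ker θ ≤ RingHom.ker η) (hr : Module.finrank K A = Module.finrank K B) :
    Nonempty (A ≃ₐ[K] B) := by
  let g : (P ⧸ RingHom.ker θ) →ₐ[K] A := Ideal.kerLiftAlg θ
  have hg : Function.Injective g := Ideal.kerLiftAlg_injective θ
  let f : (P ⧸ RingHom.ker θ) →ₐ[K] B := Ideal.Quotient.liftₐ _ η (fun a ha => hk ha)
  have hf : Function.Surjective f := by
    intro b
    obtain ⟨p, rfl⟩ := hη b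
    exact ⟨Ideal.Quotient.mk _ p, rfl⟩
  have : FiniteDimensional K (P ⧸ RingHom.ker θ) :=
    FiniteDimensional.of_injective g.toLinearMap hg
  have h1 : Module.finrank K (P ⧸ RingHom.ker θ) ≤ Module.finrank K A :=
    LinearMap.finrank_le_finrank_of_injective (f := g.toLinearMap) hg
  have h2 : Module.finrank K B ≤ Module.finrank K (P ⧸ RingHom.ker θ) :=
    LinearMap.finrank_le_finrank_of_surjective (f := f.toLinearMap) hf
  have hg' : Function.Surjective g :=
    (LinearMap.injective_iff_surjective_of_finrank_eq_finrank (f := g.toLinearMap) (by omega)).1 hg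
  have hf' : Function.Injective f :=
    (LinearMap.injective_iff_surjective_of_finrank_eq_finrank (f := f.toLinearMap) (by omega)).2 hf
  exact ⟨(AlgEquiv.ofBijective g ⟨hg, hg'⟩).symm.trans (AlgEquiv.ofBijective f ⟨hf', hf⟩)⟩

structure GoodAlg {K A : Type*} [Field K] [CommRing A] [Algebra K A] {n : ℕ}
    (x : Fin n → A) (l : A →ₗ[K] K) : Prop where
  rank : Module.finrank K A = 2 * n + 2
  dec : ∀ a : A, ∃ c : K, ∃ g : Fin n → A, a = algebraMap K A c + ∑ i, g i * x i
  ann : ∀ a, (∀ b, l (b * a) = 0) → a = 0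
  nil : Ideal.span (Set.range x) ^ 4 = ⊥

namespace GoodAlg

variable {K A : Type*} [Field K] [CommRing A] [Algebra K A] {n : ℕ}
    {x : Fin n → A} {l : A →ₗ[K] K}

theorem finite (h : GoodAlg x l) : FiniteDimensional K A :=
  Module.finite_of_finrank_pos (by rw [h.rank]; omega)

theorem nontriv (h : GoodAlg x l) : Nontrivial A := by
  apply Module.nontrivial_of_finrank_pos (R := K)
  rw [h.rank]; omega

theorem xm (x : Fin n → A) (i : Fin n) : x i ∈ Ideal.span (Set.range x) :=
  Ideal.subset_span ⟨i, rfl⟩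

theorem dec' (h : GoodAlg x l) (a : A) :
    ∃ c : K, ∃ r ∈ Ideal.span (Set.range x), a = algebraMap K A c + r := by
  obtain ⟨c, g, e⟩ := h.dec a
  exact ⟨c, _, Ideal.sum_mem _ fun i _ => Ideal.mul_mem_left _ _ (xm x i), e⟩

theorem zero_of_mem {I : Ideal A} (h : I ^ 4 = ⊥) {k : ℕ} (hk : 4 ≤ k) {a : A} (ha : a ∈ I ^ k) :
    a = 0 := by
  have := Ideal.pow_le_pow_right hk ha
  rwa [h] at this

theorem mem_mul {I : Ideal A} {a b : A} (i j : ℕ) {k : ℕ} (ha : a ∈ I ^ i) (hb : b ∈ I ^ j)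
    (hk : k = i + j := by rfl) : a * b ∈ I ^ k := by
  rw [hk, pow_add]; exact Ideal.mul_mem_mul ha hb

theorem surj (h : GoodAlg x l) : Function.Surjective (MvPolynomial.aeval (R := K) x) := by
  have key : ∀ k : ℕ, ∀ a : A, ∃ p : MvPolynomial (Fin n) K,
      a - MvPolynomial.aeval x p ∈ Ideal.span (Set.range x) ^ k := by
    intro k
    induction k with
    | zero => intro a; exact ⟨0, by simp⟩
    | succ k ih =>
      intro a
      obtain ⟨c, g, e⟩ := h.dec a
      choose p hp using fun i => ih (g i)
      refine ⟨MvPolynomial.C c + ∑ i, p i * MvPolynomial.X i, ?_⟩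
      have : a - MvPolynomial.aeval x (MvPolynomial.C c + ∑ i, p i * MvPolynomial.X i)
          = ∑ i, (g i - MvPolynomial.aeval x (p i)) * x i := by
        rw [e]; simp [sub_mul]
      rw [this]
      refine Ideal.sum_mem _ fun i _ => ?_
      rw [pow_succ]
      exact Ideal.mul_mem_mul (hp i) (xm x i)
  intro a
  obtain ⟨p, hp⟩ := key 4 a
  rw [h.nil] at hp
  exact ⟨p, (sub_eq_zero.1 hp).symm⟩

theorem mem_of_pow (h : GoodAlg x l) {a : A} (ha : a ^ 4 = 0) :
    a ∈ Ideal.span (Set.range x) := by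
  obtain ⟨c, r, hr, e⟩ := h.dec' a
  have := h.nontriv
  have hrn : IsNilpotent r := ⟨4, zero_of_mem h.nil le_rfl (Ideal.pow_mem_pow hr 4)⟩
  have hc : IsNilpotent (algebraMap K A c) := by
    have : algebraMap K A c = a - r := by rw [e]; ring
    rw [this]
    exact (Commute.all _ _).isNilpotent_sub ⟨4, ha⟩ hrn
  have : c = 0 := by
    obtain ⟨k, hk⟩ := hc
    rw [← map_pow] at hk
    have := (algebraMap K A).injective (hk.trans (map_zero _).symm)
    exact eq_zero_of_pow_eq_zero this
  rw [e, this]; simpa using hr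

theorem lin (h : GoodAlg x l) {a : A} (ha : a ^ 4 = 0) :
    ∃ v : Fin n → K, ∃ r ∈ Ideal.span (Set.range x) ^ 2, a = ∑ i, v i • x i + r := by
  have hm := h.mem_of_pow ha
  rw [Ideal.mem_span_range_iff_exists_fun] at hm
  obtain ⟨g, hg⟩ := hm
  choose c r hr e using fun i => h.dec' (g i)
  refine ⟨c, ∑ i, r i * x i, Ideal.sum_mem _ fun i _ => ?_, ?_⟩
  · rw [pow_two]; exact Ideal.mul_mem_mul (hr i) (xm x i)
  · rw [← hg, ← Finset.sum_add_distrib]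
    refine Finset.sum_congr rfl fun i _ => ?_
    rw [e i, Algebra.smul_def]; ring

/-- the trace form -/
noncomputable def form (l : A →ₗ[K] K) : LinearMap.BilinForm K A :=
  (LinearMap.mul K A).compr₂ l

@[simp] theorem form_apply (a b : A) : form l a b = l (a * b) := rfl

theorem form_nondeg (h : GoodAlg x l) : (form l).Nondegenerate := by
  constructor
  · intro a ha
    exact h.ann a fun b => by simpa [mul_comm] using ha b
  · intro a ha
    exact h.ann a fun b => by simpa using ha b

theorem exists_rep (h : GoodAlg x l) (f : A →ₗ[K] K) : ∃ w, ∀ a, f a = l (w * a) := by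
  have := h.finite
  have := h.form_nondeg
  refine ⟨((form l).toDual this).symm f, fun a => ?_⟩
  rw [← form_apply, LinearMap.BilinForm.apply_toDual_symm_apply]

theorem nd (h : GoodAlg x l) (h2 : Module.finrank K (A ⧸ Ideal.span (Set.range x) ^ 2) = n + 1)
    (v : Fin n → K) (hv : ∀ j k, l ((∑ i, v i • x i) * x j * x k) = 0) : v = 0 := by
  have := h.finite
  set m := Ideal.span (Set.range x) with hm
  set z := ∑ i, v i • x i with hz
  have hzm : z ∈ m := Ideal.sum_mem _ fun i _ => Submodule.smul_of_tower_mem _ _ (xm x i)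
  -- z kills m^2
  have h1 : ∀ q ∈ m ^ 2, ∀ b, l (z * q * b) = 0 := by
    intro q hq
    rw [pow_two, hm, Ideal.span_mul_span'] at hq
    induction hq using Submodule.span_induction with
    | mem q hq =>
      obtain ⟨_, ⟨j, rfl⟩, _, ⟨k, rfl⟩, rfl⟩ := hq
      intro b
      obtain ⟨c, r, hr, e⟩ := h.dec' b
      have h0 : z * (x j * x k) * r = 0 := by
        refine zero_of_mem h.nil (k := 4) le_rfl ?_
        refine mem_mul 3 1 (mem_mul 1 2 (by simpa) (mem_mul 1 1 ?_ ?_)) (by simpa)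
        · simpa using xm x j
        · simpa using xm x k
      have : z * (x j * x k) * b = c • (z * x j * x k) := by
        rw [e, mul_add, h0, Algebra.smul_def]; ring
      simp only at this ⊢
      rw [this, map_smul, hv, smul_zero]
    | zero => simp
    | add p q _ _ hp hq => intro b; rw [mul_add, add_mul, map_add, hp, hq, add_zero]
    | smul a q _ hq =>
      intro b
      have : z * (a • q) * b = z * q * (a * b) := by rw [smul_eq_mul]; ring
      rw [this, hq]
  let W : Submodule K A := (m ^ 2).restrictScalars K
  have hW : Module.finrank K W = n + 1 := by
    have := Submodule.finrank_quotient_add_finrank W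
    have e : Module.finrank K (A ⧸ W) = Module.finrank K (A ⧸ m ^ 2) := rfl
    rw [e, h2, h.rank] at this
    omega
  have hsymm : (form l).IsRefl := fun a b hab => by
    simpa [mul_comm] using hab
  have hWo := LinearMap.BilinForm.finrank_orthogonal h.form_nondeg W
  have hle : W ≤ (form l).orthogonal W := by
    intro a ha b hb
    have h0 : b * a = 0 := zero_of_mem h.nil le_rfl (mem_mul 2 2 hb ha : b * a ∈ m ^ 4)
    simp [h0]
  have heq : W = (form l).orthogonal W :=
    Submodule.eq_of_le_of_finrank_eq hle (by rw [hWo, h.rank, hW]; omega)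
  have hzW : z ∈ W := by
    rw [heq]
    intro b hb
    have := h1 b hb 1
    simpa [mul_comm] using this
  -- linear independence
  let π := Ideal.Quotient.mkₐ K (m ^ 2)
  let b : Option (Fin n) → A ⧸ m ^ 2 := fun o => o.elim 1 (fun i => π (x i))
  have hsp : ⊤ ≤ Submodule.span K (Set.range b) := by
    intro a _
    obtain ⟨a, rfl⟩ := Ideal.Quotient.mk_surjective a
    obtain ⟨c, g, e⟩ := h.dec a
    choose c' r hr e' using fun i => h.dec' (g i)
    have hpr : π (∑ i, r i * x i) = 0 := by
      refine Ideal.Quotient.eq_zero_iff_mem.2 (Ideal.sum_mem _ fun i _ => ?_)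
      rw [pow_two]; exact Ideal.mul_mem_mul (hr i) (xm x i)
    have : π a = c • b none + ∑ i, c' i • b (some i) := by
      have : a = c • (1 : A) + ∑ i, c' i • x i + ∑ i, r i * x i := by
        rw [e, add_assoc, ← Finset.sum_add_distrib, Algebra.smul_def, mul_one]
        congr 1
        refine Finset.sum_congr rfl fun i _ => ?_
        rw [e' i, Algebra.smul_def]; ring
      rw [this, map_add, hpr, add_zero, map_add, map_smul, map_one, map_sum]
      simp [b]
    change π a ∈ _
    rw [this]
    refine Submodule.add_mem _ (Submodule.smul_mem _ _ (Submodule.subset_span ⟨_, rfl⟩))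
      (Submodule.sum_mem _ fun i _ => Submodule.smul_mem _ _ (Submodule.subset_span ⟨_, rfl⟩))
  have hli := linearIndependent_of_top_le_span_of_card_eq_finrank hsp (by simp [h2])
  rw [Fintype.linearIndependent_iff] at hli
  have := hli (fun o => o.elim 0 v) (by
    rw [Fintype.sum_option]
    simp only [Option.elim, zero_smul, zero_add, b]
    have : π z = 0 := Ideal.Quotient.eq_zero_iff_mem.2 hzW
    rw [hz, map_sum] at this
    simpa using this)
  funext i
  exact this (some i)

theorem lin_mem (x : Fin n → A) (v : Fin n → K) : ∑ i, v i • x i ∈ Ideal.span (Set.range x) :=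
  Ideal.sum_mem _ fun i _ => Submodule.smul_of_tower_mem _ _ (xm x i)

theorem cube (hn : Ideal.span (Set.range x) ^ 4 = ⊥) {p q r p' q' r' : A}
    (hp : p ∈ Ideal.span (Set.range x)) (hq : q ∈ Ideal.span (Set.range x))
    (hr : r ∈ Ideal.span (Set.range x)) (hp' : p' ∈ Ideal.span (Set.range x) ^ 2)
    (hq' : q' ∈ Ideal.span (Set.range x) ^ 2) (hr' : r' ∈ Ideal.span (Set.range x) ^ 2) :
    (p + p') * (q + q') * (r + r') = p * q * r := by
  set m := Ideal.span (Set.range x)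
  have h2 : m ^ 2 ≤ m ^ 1 := Ideal.pow_le_pow_right (by norm_num)
  have hp1 : p ∈ m ^ 1 := by simpa
  have hq1 : q ∈ m ^ 1 := by simpa
  have hr1 : r ∈ m ^ 1 := by simpa
  have e1 : p' * (q + q') * (r + r') = 0 :=
    zero_of_mem hn le_rfl (mem_mul 3 1 (mem_mul 2 1 hp' (add_mem hq1 (h2 hq')))
      (add_mem hr1 (h2 hr')))
  have e2 : p * q' * (r + r') = 0 :=
    zero_of_mem hn le_rfl (mem_mul 3 1 (mem_mul 1 2 hp1 hq') (add_mem hr1 (h2 hr')))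
  have e3 : p * q * r' = 0 :=
    zero_of_mem hn le_rfl (mem_mul 2 2 (mem_mul 1 1 hp1 hq1) hr')
  linear_combination e1 + e2 + e3

theorem forward {B : Type*} [CommRing B] [Algebra K B] {y : Fin n → B} {l' : B →ₗ[K] K}
    (hn : n ≠ 0)
    (h : GoodAlg x l) (h' : GoodAlg y l')
    (nd : ∀ v : Fin n → K, (∀ j k, l ((∑ i, v i • x i) * x j * x k) = 0) → v = 0)
    (nd' : ∀ v : Fin n → K, (∀ j k, l' ((∑ i, v i • y i) * y j * y k) = 0) → v = 0)
    (Θ : B ≃ₐ[K] A) :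
    ∃ φ : GL (Fin n) K, ∃ c : K, c ≠ 0 ∧ ∀ i j k,
      l ((∑ a, (φ : Matrix (Fin n) (Fin n) K) a i • x a) *
        (∑ a, (φ : Matrix (Fin n) (Fin n) K) a j • x a) *
        (∑ a, (φ : Matrix (Fin n) (Fin n) K) a k • x a)) = c * l' (y i * y j * y k) := by
  have hy4 : ∀ i, y i ^ 4 = 0 := fun i =>
    zero_of_mem h'.nil le_rfl (Ideal.pow_mem_pow (xm y i) 4)
  have hx4 : ∀ i, x i ^ 4 = 0 := fun i =>
    zero_of_mem h.nil le_rfl (Ideal.pow_mem_pow (xm x i) 4)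
  choose v r hr e using fun i => h.lin (a := Θ (y i)) (by rw [← map_pow, hy4, map_zero])
  obtain ⟨w, hw⟩ := h'.exists_rep (l.comp Θ.toLinearMap)
  obtain ⟨c, s, hs, ew⟩ := h'.dec' w
  have hw3 : ∀ p q t, p ∈ Ideal.span (Set.range y) → q ∈ Ideal.span (Set.range y) →
      t ∈ Ideal.span (Set.range y) → l (Θ (p * q * t)) = c * l' (p * q * t) := by
    intro p q t hp hq ht
    have := hw (p * q * t)
    have h0 : s * (p * q * t) = 0 :=
      zero_of_mem h'.nil le_rfl (mem_mul 1 3 (by simpa)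
        (mem_mul 2 1 (mem_mul 1 1 (by simpa) (by simpa)) (by simpa)))
    rw [ew, add_mul, h0, add_zero, ← Algebra.smul_def, map_smul] at this
    exact this
  have key : ∀ i j k, l ((∑ a, v i a • x a) * (∑ a, v j a • x a) * (∑ a, v k a • x a))
      = c * l' (y i * y j * y k) := by
    intro i j k
    rw [← hw3 _ _ _ (xm y i) (xm y j) (xm y k), map_mul Θ, map_mul Θ, e i, e j, e k,
      cube h.nil (lin_mem x _) (lin_mem x _) (lin_mem x _) (hr i) (hr j) (hr k)]
  have hc : c ≠ 0 := by
    rintro rfl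
    have hxs : ∀ i, Θ.symm (x i) ∈ Ideal.span (Set.range y) := fun i =>
      h'.mem_of_pow (by rw [← map_pow, hx4, map_zero])
    have h0 : ∀ i j k, l (x i * x j * x k) = 0 := by
      intro i j k
      have := hw3 _ _ _ (hxs i) (hxs j) (hxs k)
      simpa using this
    have := nd (fun _ => 1) (fun j k => by simp [Finset.sum_mul, h0])
    exact one_ne_zero (congrFun this ⟨0, Nat.pos_of_ne_zero hn⟩)
  let M : Matrix (Fin n) (Fin n) K := Matrix.of fun a i => v i a
  have hM : IsUnit M := by
    rw [← Matrix.mulVec_injective_iff_isUnit]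
    rw [← Matrix.coe_mulVecLin, injective_iff_map_eq_zero]
    intro u hu
    apply nd'
    intro j k
    have hu' : ∀ a, ∑ i, u i * v i a = 0 := fun a => by
      have := congrFun hu a
      simpa [M, Matrix.mulVec, dotProduct, mul_comm] using this
    have hz : ∑ i, u i • ∑ a, v i a • x a = 0 := by
      simp only [Finset.smul_sum, smul_smul]
      rw [Finset.sum_comm]
      simp [← Finset.sum_smul, hu']
    have : c * l' ((∑ i, u i • y i) * y j * y k) = 0 := by
      rw [Finset.sum_mul, Finset.sum_mul, map_sum, Finset.mul_sum]
      have : ∀ i, c * l' (u i • y i * y j * y k) =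
          l (u i • (∑ a, v i a • x a) * (∑ a, v j a • x a) * (∑ a, v k a • x a)) := by
        intro i
        simp only [smul_mul_assoc, map_smul, key, smul_eq_mul]; ring
      simp only [this]
      rw [← map_sum, ← Finset.sum_mul, ← Finset.sum_mul, hz]; simp
    exact (mul_eq_zero.1 this).resolve_left hc
  exact ⟨hM.unit, c, hc, key⟩

theorem backward [CharZero K] {B : Type*} [CommRing B] [Algebra K B] {y : Fin n → B}
    {l' : B →ₗ[K] K} (hn : n ≠ 0)
    (h : GoodAlg x l) (h' : GoodAlg y l')
    (nd : ∀ v : Fin n → K, (∀ j k, l ((∑ i, v i • x i) * x j * x k) = 0) → v = 0)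
    (φ : GL (Fin n) K) (c : K) (hc : c ≠ 0) (hφ : ∀ i j k,
      l ((∑ a, (φ : Matrix (Fin n) (Fin n) K) a i • x a) *
        (∑ a, (φ : Matrix (Fin n) (Fin n) K) a j • x a) *
        (∑ a, (φ : Matrix (Fin n) (Fin n) K) a k • x a)) = c * l' (y i * y j * y k)) :
    Nonempty (A ≃ₐ[K] B) := by
  have := h.finite
  have := h'.finite
  set L : Fin n → A := fun i => ∑ a, (φ : Matrix (Fin n) (Fin n) K) a i • x a with hL
  set m := Ideal.span (Set.range x) with hm
  have hLm : ∀ i, L i ∈ m := fun i => lin_mem x _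
  -- surjectivity
  have hsur : ∀ t : Fin n → K, ∃ q ∈ m ^ 2, ∀ a, l (L a * q) = t a := by
    let Q : ((m ^ 2).restrictScalars K) →ₗ[K] (Fin n → K) :=
      LinearMap.pi fun a => (l.comp (LinearMap.mulLeft K (L a))).comp
        ((m ^ 2).restrictScalars K).subtype
    have hQ : LinearMap.range Q = ⊤ := by
      by_contra hne
      obtain ⟨f, hf0, hf⟩ := Submodule.exists_le_ker_of_lt_top _ (lt_top_iff_ne_top.2 hne)
      apply hf0
      set u : Fin n → K := fun a => f (fun j => if a = j then 1 else 0) with hu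
      have hfe : ∀ t, f t = ∑ a, t a * u a := fun t => LinearMap.pi_apply_eq_sum_univ f t
      have h1 : (φ : Matrix (Fin n) (Fin n) K).mulVec u = 0 := by
        apply nd
        intro j k
        have hq : x j * x k ∈ m ^ 2 := mem_mul 1 1 (by simpa using xm x j) (by simpa using xm x k)
        have := hf ⟨⟨x j * x k, hq⟩, rfl⟩
        rw [LinearMap.mem_ker, hfe] at this
        have e2 : ∑ i, (φ : Matrix (Fin n) (Fin n) K).mulVec u i • x i = ∑ a, u a • L a := by
          simp only [hL, Finset.smul_sum, smul_smul, Matrix.mulVec, dotProduct, Finset.sum_smul]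
          rw [Finset.sum_comm]
          simp only [mul_comm]
        rw [e2, mul_assoc, Finset.sum_mul, map_sum, ← this]
        refine Finset.sum_congr rfl fun a _ => ?_
        simp [Q, mul_comm, hu]
      have h2 : u = 0 := by
        have := (Matrix.mulVec_injective_iff_isUnit.2 φ.isUnit) (h1.trans (Matrix.mulVec_zero _).symm)
        exact this
      refine LinearMap.ext fun t => ?_
      rw [hfe, h2]; simp
    intro t
    obtain ⟨⟨q, hq⟩, e⟩ := (LinearMap.range_eq_top.1 hQ) t
    exact ⟨q, hq, fun a => congrFun e a⟩
  obtain ⟨s, hs, hs1⟩ : ∃ s ∈ m ^ 3, l s = 1 := by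
    obtain ⟨q, hq, e⟩ := hsur (fun _ => 1)
    exact ⟨_, mem_mul 1 2 (by simpa using hLm ⟨0, Nat.pos_of_ne_zero hn⟩) hq, e _⟩
  choose D hD eD using fun b : Fin n =>
    hsur (fun a => (c * l' (y a * y b) - l (L a * L b)) / 2)
  let E : Fin n → A := fun a => (c * l' (y a) - l (L a) - l (D a)) • s
  have hE : ∀ a, E a ∈ m ^ 3 := fun a => Submodule.smul_of_tower_mem _ _ hs
  let z : Fin n → A := fun a => L a + (D a + E a)
  have h32 : m ^ 3 ≤ m ^ 2 := Ideal.pow_le_pow_right (by norm_num)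
  have h21 : m ^ 2 ≤ m := Ideal.pow_le_self (by norm_num)
  have hDE : ∀ a, D a + E a ∈ m ^ 2 := fun a => add_mem (hD a) (h32 (hE a))
  have hz : ∀ a, z a ∈ m := fun a => add_mem (hLm a) (h21 (hDE a))
  set e0 : K := c * l' 1 - l 1 with he0
  let u : A := 1 + e0 • s
  have hu : ∀ r ∈ m, u * r = r := by
    intro r hr
    have : s * r = 0 := zero_of_mem h.nil le_rfl (mem_mul 3 1 hs (by simpa))
    simp [u, add_mul, this]
  have hlist : ∀ t : List (Fin n), l (u * (t.map z).prod) = c * l' ((t.map y).prod) := by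
    intro t
    match t with
    | [] => simp [u, hs1, he0]
    | [a] =>
      simp only [List.map_cons, List.map_nil, List.prod_cons, List.prod_nil, mul_one]
      rw [hu _ (hz a)]
      simp only [z, E, map_add, map_smul, hs1, smul_eq_mul]; ring
    | [a, b] =>
      simp only [List.map_cons, List.map_nil, List.prod_cons, List.prod_nil, mul_one]
      rw [hu _ (Ideal.mul_mem_left _ _ (hz b))]
      have h1 : (D a + E a) * (D b + E b) = 0 :=
        zero_of_mem h.nil le_rfl (mem_mul 2 2 (hDE a) (hDE b))
      have h2 : L a * E b = 0 :=
        zero_of_mem h.nil le_rfl (mem_mul 1 3 (by simpa using hLm a) (hE b))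
      have h3 : L b * E a = 0 :=
        zero_of_mem h.nil le_rfl (mem_mul 1 3 (by simpa using hLm b) (hE a))
      have : z a * z b = L a * L b + L a * D b + L b * D a := by
        simp only [z]; linear_combination h1 + h2 + h3
      rw [this, map_add, map_add, eD, eD, mul_comm (y b), mul_comm (L b)]
      ring
    | [a, b, d] =>
      simp only [List.map_cons, List.map_nil, List.prod_cons, List.prod_nil, mul_one]
      rw [hu _ (Ideal.mul_mem_right _ _ (hz a)), ← mul_assoc, ← mul_assoc, ← hφ]
      rw [cube h.nil (hLm a) (hLm b) (hLm d) (hDE a) (hDE b) (hDE d)]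
    | a :: b :: d :: f :: t =>
      simp only [List.map_cons, List.prod_cons]
      have h1 : z a * z b * (z d * z f) = 0 :=
        zero_of_mem h.nil le_rfl (mem_mul 2 2 (mem_mul 1 1 (by simpa using hz a)
          (by simpa using hz b)) (mem_mul 1 1 (by simpa using hz d) (by simpa using hz f)))
      have h2 : y a * y b * (y d * y f) = 0 :=
        zero_of_mem h'.nil le_rfl (mem_mul 2 2 (mem_mul 1 1 (by simpa using xm y a)
          (by simpa using xm y b)) (mem_mul 1 1 (by simpa using xm y d) (by simpa using xm y f)))
      have e1 : u * (z a * (z b * (z d * (z f * (t.map z).prod)))) = 0 := by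
        linear_combination u * (t.map z).prod * h1
      have e2 : (y a * (y b * (y d * (y f * (t.map y).prod)))) = 0 := by
        linear_combination (t.map y).prod * h2
      rw [e1, e2]; simp
  have hpoly : ∀ (p : MvPolynomial (Fin n) K) (t : List (Fin n)),
      l (u * (MvPolynomial.aeval z p * (t.map z).prod)) =
        c * l' (MvPolynomial.aeval y p * (t.map y).prod) := by
    intro p
    induction p using MvPolynomial.induction_on with
    | C a =>
      intro t
      simp only [MvPolynomial.aeval_C, ← Algebra.smul_def, mul_smul_comm, map_smul, hlist,
        smul_eq_mul]
      ring
    | add p q hp hq =>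
      intro t
      simp only [map_add, add_mul, mul_add, hp, hq]
    | mul_X p i hp =>
      intro t
      have := hp (i :: t)
      simp only [List.map_cons, List.prod_cons] at this
      simpa [mul_assoc] using this
  refine aux_equiv_of_ker (MvPolynomial.aeval (R := K) z) (MvPolynomial.aeval (R := K) y) h'.surj
    ?_ (by rw [h.rank, h'.rank])
  intro p hp
  rw [RingHom.mem_ker] at hp ⊢
  apply h'.ann
  intro b
  obtain ⟨q, rfl⟩ := h'.surj b
  have := hpoly (q * p) []
  rw [map_mul (MvPolynomial.aeval z), map_mul (MvPolynomial.aeval y), hp] at this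
  simp only [mul_zero, map_zero, List.map_nil, List.prod_nil, mul_one] at this
  exact (mul_eq_zero.1 this.symm).resolve_left hc

end GoodAlg

section Concrete

variable {K : Type*} [Field K] {n : ℕ}

theorem ps_dec (f : MvPowerSeries (Fin n) K) :
    ∃ g : Fin n → MvPowerSeries (Fin n) K,
      f = algebraMap K _ (MvPowerSeries.constantCoeff f) + ∑ i, g i * MvPowerSeries.X i := by
  classical
  let g : Fin n → MvPowerSeries (Fin n) K := fun i β =>
    if ∀ j < i, β j = 0 then MvPowerSeries.coeff (β + Finsupp.single i 1) f else 0
  have hg : ∀ i β, MvPowerSeries.coeff β (g i) =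
    if ∀ j < i, β j = 0 then MvPowerSeries.coeff (β + Finsupp.single i 1) f else 0 := fun i β => rfl
  refine ⟨g, ?_⟩
  ext α
  rw [map_add, map_sum, MvPowerSeries.algebraMap_apply, Algebra.algebraMap_self, RingHom.id_apply,
    MvPowerSeries.coeff_C]
  simp only [MvPowerSeries.X_def, MvPowerSeries.coeff_mul_monomial, mul_one]
  by_cases hα : α = 0
  · subst hα
    simp
  rw [if_neg hα, zero_add]
  have hne : α.support.Nonempty := Finsupp.support_nonempty_iff.2 hα
  set i0 := α.support.min' hne with hi0
  have hi0m : α i0 ≠ 0 := Finsupp.mem_support_iff.1 (Finset.min'_mem _ hne)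
  have hlt : ∀ j < i0, α j = 0 := by
    intro j hj
    by_contra h
    exact absurd (Finset.min'_le _ j (Finsupp.mem_support_iff.2 h)) (not_le.2 hj)
  rw [Finset.sum_eq_single i0]
  · have h1 : Finsupp.single i0 1 ≤ α := by
      rw [Finsupp.single_le_iff]; omega
    rw [if_pos h1, hg, if_pos, tsub_add_cancel_of_le h1]
    intro j hj
    simp [hlt j hj]
  · intro i _ hi
    split_ifs with h1
    · rw [Finsupp.single_le_iff] at h1
      rw [hg, if_neg]
      intro hall
      rcases lt_or_gt_of_ne hi with h2 | h2
      · have := hlt i h2; omega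
      · have := hall i0 h2
        simp [hi] at this
        omega
    · rfl
  · simp

theorem mxR_eq : mxR K n = Ideal.span (Set.range MvPowerSeries.X) := by
  apply le_antisymm
  · intro f hf
    have hf : MvPowerSeries.constantCoeff f = 0 := hf
    obtain ⟨g, e⟩ := ps_dec f
    rw [hf, map_zero, zero_add] at e
    rw [e]
    exact Ideal.sum_mem _ fun i _ => Ideal.mul_mem_left _ _ (Ideal.subset_span ⟨i, rfl⟩)
  · rw [Ideal.span_le]
    rintro _ ⟨i, rfl⟩
    exact MvPowerSeries.constantCoeff_X i

/-- product of factorials -/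
noncomputable def mfac (K : Type*) [Field K] {n : ℕ} (β : Fin n →₀ ℕ) : K :=
  ∏ i, ((β i).factorial : K)

theorem mfac_ne [CharZero K] (β : Fin n →₀ ℕ) : mfac K β ≠ 0 :=
  Finset.prod_ne_zero_iff.2 fun i _ => by exact_mod_cast (Nat.factorial_ne_zero _)

theorem mfac_add (β : Fin n →₀ ℕ) (k : Fin n) :
    mfac K (β + Finsupp.single k 1) = mfac K β * (β k + 1) := by
  classical
  unfold mfac
  rw [← Finset.mul_prod_erase _ _ (Finset.mem_univ k), ← Finset.mul_prod_erase Finset.univ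
    (fun i => ((β i).factorial : K)) (Finset.mem_univ k)]
  have : ∏ x ∈ Finset.univ.erase k, ((((β + Finsupp.single k 1 : Fin n →₀ ℕ)) x).factorial : K) =
      ∏ x ∈ Finset.univ.erase k, ((β x).factorial : K) := by
    refine Finset.prod_congr rfl fun x hx => ?_
    have : k ≠ x := (Finset.ne_of_mem_erase hx).symm
    simp [Finsupp.single_apply, this]
  rw [this]
  simp [Nat.factorial_succ]
  ring

/-- the dual functional -/
noncomputable def lam (F : MvPolynomial (Fin n) K) : MvPowerSeries (Fin n) K →ₗ[K] K :=
  ∑ β ∈ F.support, (F.coeff β * mfac K β) • MvPowerSeries.coeff β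

theorem lam_apply (F : MvPolynomial (Fin n) K) (f : MvPowerSeries (Fin n) K) :
    lam F f = ∑ β ∈ F.support, F.coeff β * (mfac K β * MvPowerSeries.coeff β f) := by
  simp [lam, mul_assoc]

theorem lam_monomial (F : MvPolynomial (Fin n) K) (γ : Fin n →₀ ℕ) :
    lam F (MvPowerSeries.monomial γ 1) = F.coeff γ * mfac K γ := by
  classical
  rw [lam_apply]
  simp only [MvPowerSeries.coeff_monomial]
  simp
  tauto

theorem contract_monomial (g : MvPowerSeries (Fin n) K) (β : Fin n →₀ ℕ) (c : K) :
    contract g (MvPolynomial.monomial β c) = c • ∑ α ∈ Finset.Iic β,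
      (MvPowerSeries.coeff α g * ∏ i, ((β i).descFactorial (α i) : K)) •
        MvPolynomial.monomial (β - α) (1 : K) := by
  have : MvPolynomial.monomial β c = c • MvPolynomial.basisMonomials (Fin n) K β := by
    rw [MvPolynomial.coe_basisMonomials, MvPolynomial.smul_monomial, smul_eq_mul, mul_one]
  rw [this, map_smul, contract, Module.Basis.constr_basis]

theorem coeff_contract (g : MvPowerSeries (Fin n) K) (F : MvPolynomial (Fin n) K)
    (γ : Fin n →₀ ℕ) :
    MvPolynomial.coeff γ (contract g F) * mfac K γ =
      lam F (MvPowerSeries.monomial γ 1 * g) := by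
  classical
  conv_lhs => rw [F.as_sum]
  rw [map_sum, MvPolynomial.coeff_sum, Finset.sum_mul, lam_apply]
  refine Finset.sum_congr rfl fun β _ => ?_
  rw [contract_monomial, MvPolynomial.coeff_smul, smul_eq_mul, mul_assoc, MvPolynomial.coeff_sum,
    MvPowerSeries.coeff_monomial_mul]
  congr 1
  simp only [MvPolynomial.coeff_smul, MvPolynomial.coeff_monomial, smul_eq_mul]
  split_ifs with h
  · rw [Finset.sum_eq_single (β - γ)]
    · rw [if_pos (tsub_tsub_cancel_of_le h)]
      have : mfac K β = mfac K γ * ∏ i, ((β i).descFactorial ((β - γ) i) : K) := by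
        unfold mfac
        rw [← Finset.prod_mul_distrib]
        refine Finset.prod_congr rfl fun i _ => ?_
        have hi : γ i ≤ β i := h i
        have := Nat.factorial_mul_descFactorial (n := β i) (k := (β - γ) i) (by simp)
        have e : β i - (β - γ) i = γ i := by simp only [Finsupp.tsub_apply]; omega
        rw [e] at this
        rw [← Nat.cast_mul, this]
      rw [this]; ring
    · intro α hα hne
      rw [if_neg, mul_zero]
      intro hh
      apply hne
      rw [← hh, tsub_tsub_cancel_of_le (Finset.mem_Iic.1 hα)]
    · intro hh
      exact absurd (Finset.mem_Iic.2 tsub_le_self) hh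
  · rw [Finset.sum_eq_zero]
    · simp
    · intro α _
      rw [if_neg, mul_zero]
      rintro rfl
      exact h tsub_le_self

theorem mem_annR [CharZero K] (F : MvPolynomial (Fin n) K) (f : MvPowerSeries (Fin n) K) :
    f ∈ annR F ↔ ∀ u, lam F (u * f) = 0 := by
  have h0 : f ∈ annR F ↔ ∀ u : MvPowerSeries (Fin n) K, contract (u * f) F = 0 := Iff.rfl
  rw [h0]
  constructor
  · intro h u
    have := coeff_contract (u * f) F 0
    rw [h u, MvPowerSeries.monomial_zero_one, one_mul] at this
    simpa using this.symm
  · intro h u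
    ext γ
    have := coeff_contract (u * f) F γ
    rw [← mul_assoc, h] at this
    simpa [mfac_ne] using this

/-- third derivatives -/
noncomputable def tens (H : MvPolynomial (Fin n) K) (i j k : Fin n) : K :=
  MvPolynomial.constantCoeff
    (MvPolynomial.pderiv i (MvPolynomial.pderiv j (MvPolynomial.pderiv k H)))

theorem lam_X (H : MvPolynomial (Fin n) K) (i j k : Fin n) :
    lam H (MvPowerSeries.X i * MvPowerSeries.X j * MvPowerSeries.X k) = tens H i j k := by
  rw [MvPowerSeries.X_def, MvPowerSeries.X_def, MvPowerSeries.X_def,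
    MvPowerSeries.monomial_mul_monomial, MvPowerSeries.monomial_mul_monomial, mul_one, mul_one,
    lam_monomial, tens, MvPolynomial.constantCoeff_eq, MvPolynomial.coeff_pderiv,
    MvPolynomial.coeff_pderiv, MvPolynomial.coeff_pderiv, mfac_add, ← zero_add (Finsupp.single i 1),
    mfac_add]
  have : mfac K (0 : Fin n →₀ ℕ) = 1 := by simp [mfac]
  simp only [zero_add]
  rw [← zero_add (Finsupp.single i 1), mfac_add, this]
  simp
  ring

theorem tens_top (F F3 : MvPolynomial (Fin n) K) (h : (F - F3).totalDegree ≤ 2) (i j k : Fin n) :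
    tens F i j k = tens F3 i j k := by
  simp only [tens, MvPolynomial.constantCoeff_eq, MvPolynomial.coeff_pderiv]
  have h1 : MvPolynomial.coeff (0 + Finsupp.single i 1 + Finsupp.single j 1 + Finsupp.single k 1)
      (F - F3) = 0 := by
    apply MvPolynomial.coeff_eq_zero_of_totalDegree_lt
    refine lt_of_le_of_lt h ?_
    rw [← Finsupp.degree_apply]
    simp [Finsupp.degree_single]
  rw [MvPolynomial.coeff_sub, sub_eq_zero] at h1
  rw [h1]

theorem eq_of_tens [CharZero K] {H H' : MvPolynomial (Fin n) K} (h : H.IsHomogeneous 3)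
    (h' : H'.IsHomogeneous 3) (e : ∀ i j k, tens H i j k = tens H' i j k) : H = H' := by
  have key : ∀ (d : ℕ) (p q : MvPolynomial (Fin n) K), p.IsHomogeneous (d + 1) →
      q.IsHomogeneous (d + 1) → (∀ i, MvPolynomial.pderiv i p = MvPolynomial.pderiv i q) →
      p = q := by
    intro d p q hp hq hpq
    have h1 := hp.sum_X_mul_pderiv
    have h2 := hq.sum_X_mul_pderiv
    simp only [hpq] at h1
    have h3 := h1.symm.trans h2
    rw [nsmul_eq_mul, nsmul_eq_mul] at h3
    exact mul_left_cancel₀ (by exact_mod_cast Nat.succ_ne_zero d) h3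
  refine key 2 _ _ h h' fun k => key 1 _ _ h.pderiv h'.pderiv fun j =>
    key 0 _ _ h.pderiv.pderiv h'.pderiv.pderiv fun i => ?_
  have h1 : ∀ {p : MvPolynomial (Fin n) K}, p.IsHomogeneous 0 →
      p = MvPolynomial.C (MvPolynomial.constantCoeff p) := by
    intro p hp
    rw [← MvPolynomial.totalDegree_zero_iff_isHomogeneous,
      MvPolynomial.totalDegree_eq_zero_iff_eq_C] at hp
    exact hp
  rw [h1 h.pderiv.pderiv.pderiv, h1 h'.pderiv.pderiv.pderiv]
  congr 1
  exact e i j k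

/-- linear substitution -/
noncomputable def lsub (M : Matrix (Fin n) (Fin n) K) :
    MvPolynomial (Fin n) K →ₐ[K] MvPolynomial (Fin n) K :=
  MvPolynomial.aeval (fun i => ∑ j, M i j • (MvPolynomial.X j : MvPolynomial (Fin n) K))

theorem pderiv_lsub (M : Matrix (Fin n) (Fin n) K) (j : Fin n) (p : MvPolynomial (Fin n) K) :
    MvPolynomial.pderiv j (lsub M p) = ∑ i, M i j • lsub M (MvPolynomial.pderiv i p) := by
  classical
  induction p using MvPolynomial.induction_on with
  | C a =>
    have : lsub M (MvPolynomial.C a) = MvPolynomial.C a := MvPolynomial.aeval_C _ _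
    simp [this]
  | add p q hp hq => simp [hp, hq, Finset.sum_add_distrib]
  | mul_X p k hp =>
    have hX : lsub M (MvPolynomial.X k) = ∑ j, M k j • MvPolynomial.X j :=
      MvPolynomial.aeval_X _ _
    have hd : MvPolynomial.pderiv j (lsub M (MvPolynomial.X k)) = MvPolynomial.C (M k j) := by
      rw [hX, map_sum]
      simp [MvPolynomial.pderiv_X, Pi.single_apply, MvPolynomial.smul_eq_C_mul]
    rw [map_mul, MvPolynomial.pderiv_mul, hp, hd]
    simp only [MvPolynomial.pderiv_mul, map_add, map_mul, smul_add, Finset.sum_add_distrib,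
      MvPolynomial.pderiv_X, Finset.sum_mul, smul_mul_assoc]
    congr 1
    simp [Pi.single_apply, MvPolynomial.smul_eq_C_mul, mul_comm, apply_ite (lsub M)]

theorem constantCoeff_lsub (M : Matrix (Fin n) (Fin n) K) (p : MvPolynomial (Fin n) K) :
    MvPolynomial.constantCoeff (lsub M p) = MvPolynomial.constantCoeff p := by
  induction p using MvPolynomial.induction_on with
  | C a =>
    have : lsub M (MvPolynomial.C a) = MvPolynomial.C a := MvPolynomial.aeval_C _ _
    simp [this]
  | add p q hp hq => simp [hp, hq]
  | mul_X p k hp =>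
    have hX : lsub M (MvPolynomial.X k) = ∑ j, M k j • MvPolynomial.X j :=
      MvPolynomial.aeval_X _ _
    simp [hX, MvPolynomial.smul_eq_C_mul]

theorem tens_lsub (M : Matrix (Fin n) (Fin n) K) (H : MvPolynomial (Fin n) K) (i j k : Fin n) :
    tens (lsub M H) i j k = ∑ c, M c k * ∑ b, M b j * ∑ a, M a i * tens H a b c := by
  simp only [tens, pderiv_lsub, map_sum, Derivation.map_smul, MvPolynomial.constantCoeff_smul,
    constantCoeff_lsub, smul_eq_mul]

theorem lsub_homog (M : Matrix (Fin n) (Fin n) K) {H : MvPolynomial (Fin n) K}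
    (h : H.IsHomogeneous 3) : (lsub M H).IsHomogeneous 3 := by
  have := h.aeval (n := 1) (fun i => ∑ j, M i j • (MvPolynomial.X j : MvPolynomial (Fin n) K))
    (fun i => MvPolynomial.IsHomogeneous.sum _ _ _ fun j _ => by
      rw [MvPolynomial.smul_eq_C_mul]
      exact (MvPolynomial.isHomogeneous_X K j).C_mul _)
  exact this

theorem tens_smul (c : K) (H : MvPolynomial (Fin n) K) (i j k : Fin n) :
    tens (c • H) i j k = c * tens H i j k := by
  simp [tens]

theorem projEquiv_iff [CharZero K] {F3 G3 : MvPolynomial (Fin n) K} (hF3 : F3.IsHomogeneous 3)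
    (hG3 : G3.IsHomogeneous 3) :
    projEquiv F3 G3 ↔ ∃ φ : GL (Fin n) K, ∃ c : K, c ≠ 0 ∧ ∀ i j k,
      ∑ d, (φ : Matrix (Fin n) (Fin n) K) d k * ∑ b, (φ : Matrix (Fin n) (Fin n) K) b j *
        ∑ a, (φ : Matrix (Fin n) (Fin n) K) a i * tens F3 a b d = c * tens G3 i j k := by
  refine exists_congr fun φ => exists_congr fun c => and_congr_right fun _ => ?_
  change lsub (φ : Matrix (Fin n) (Fin n) K) F3 = c • G3 ↔ _
  constructor
  · intro h i j k
    rw [← tens_lsub, h, tens_smul]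
  · intro h
    refine eq_of_tens (lsub_homog _ hF3) ?_ fun i j k => ?_
    · rw [MvPolynomial.smul_eq_C_mul]; exact hG3.C_mul _
    · rw [tens_lsub, h, tens_smul]

/-- the functional on the quotient -/
noncomputable def ell [CharZero K] (F : MvPolynomial (Fin n) K) :
    (MvPowerSeries (Fin n) K ⧸ annR F) →ₗ[K] K :=
  Submodule.liftQ ((annR F).restrictScalars K) (lam F) (fun f hf => by
    have := (mem_annR F f).1 hf 1
    simpa using this)

theorem ell_mk [CharZero K] (F : MvPolynomial (Fin n) K) (f : MvPowerSeries (Fin n) K) :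
    ell F (Ideal.Quotient.mk _ f) = lam F f := rfl

/-- generators -/
noncomputable def gen (F : MvPolynomial (Fin n) K) (i : Fin n) :
    MvPowerSeries (Fin n) K ⧸ annR F := Ideal.Quotient.mk _ (MvPowerSeries.X i)

theorem span_gen (F : MvPolynomial (Fin n) K) :
    Ideal.span (Set.range (gen F)) = (mxR K n).map (Ideal.Quotient.mk (annR F)) := by
  rw [mxR_eq, Ideal.map_span, ← Set.range_comp]
  rfl

theorem ranks (hn : n ≠ 0) (F : MvPolynomial (Fin n) K)
    (hF0 : hilbQ (annR F) 0 = 1) (hF1 : hilbQ (annR F) 1 = n)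
    (hF2 : hilbQ (annR F) 2 = n) (hFs : hilbQ (annR F) 3 = 1)
    (hFm : mxR K n ^ 4 ≤ annR F) :
    Module.finrank K (MvPowerSeries (Fin n) K ⧸ annR F) = 2 * n + 2 ∧
    Module.finrank K (MvPowerSeries (Fin n) K ⧸ (annR F ⊔ mxR K n ^ 2)) = n + 1 := by
  unfold hilbQ at *
  have h0 : Module.finrank K (MvPowerSeries (Fin n) K ⧸ (annR F ⊔ mxR K n ^ 0)) = 0 := by
    have : annR F ⊔ mxR K n ^ 0 = ⊤ := by simp
    rw [this]
    have : Subsingleton (MvPowerSeries (Fin n) K ⧸ (⊤ : Ideal (MvPowerSeries (Fin n) K))) :=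
      Ideal.Quotient.subsingleton_iff.2 rfl
    exact Module.finrank_zero_of_subsingleton
  have h4 : annR F ⊔ mxR K n ^ (3 + 1) = annR F := sup_eq_left.2 hFm
  rw [h4] at hFs
  simp only [Nat.reduceAdd] at *
  omega

theorem good [CharZero K] (hn : n ≠ 0) (F : MvPolynomial (Fin n) K)
    (hF0 : hilbQ (annR F) 0 = 1) (hF1 : hilbQ (annR F) 1 = n)
    (hF2 : hilbQ (annR F) 2 = n) (hFs : hilbQ (annR F) 3 = 1)
    (hFm : mxR K n ^ 4 ≤ annR F) :
    GoodAlg (gen F) (ell F) ∧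
      Module.finrank K ((MvPowerSeries (Fin n) K ⧸ annR F) ⧸
        Ideal.span (Set.range (gen F)) ^ 2) = n + 1 := by
  obtain ⟨h1, h2⟩ := ranks hn F hF0 hF1 hF2 hFs hFm
  refine ⟨⟨h1, ?_, ?_, ?_⟩, ?_⟩
  · intro a
    obtain ⟨f, rfl⟩ := Ideal.Quotient.mk_surjective a
    obtain ⟨g, e⟩ := ps_dec f
    refine ⟨MvPowerSeries.constantCoeff f, fun i => Ideal.Quotient.mk _ (g i), ?_⟩
    conv_lhs => rw [e]
    rw [map_add, map_sum]
    simp only [map_mul]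
    rfl
  · intro a ha
    obtain ⟨f, rfl⟩ := Ideal.Quotient.mk_surjective a
    rw [Ideal.Quotient.eq_zero_iff_mem, mem_annR]
    intro u
    have := ha (Ideal.Quotient.mk _ u)
    rwa [← map_mul, ell_mk] at this
  · rw [span_gen, ← Ideal.map_pow, Ideal.map_eq_bot_iff_le_ker, Ideal.mk_ker]
    exact hFm
  · rw [span_gen, ← Ideal.map_pow, ← h2]
    exact (DoubleQuot.quotQuotEquivQuotSupₐ K (annR F) (mxR K n ^ 2)).toLinearEquiv.finrank_eq

theorem ell_gen [CharZero K] (F F3 : MvPolynomial (Fin n) K) (h : (F - F3).totalDegree ≤ 2)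
    (i j k : Fin n) : ell F (gen F i * gen F j * gen F k) = tens F3 i j k := by
  rw [gen, gen, gen, ← map_mul, ← map_mul, ell_mk, lam_X, tens_top F F3 h]

theorem ell_lin [CharZero K] (F F3 : MvPolynomial (Fin n) K) (h : (F - F3).totalDegree ≤ 2)
    (u v w : Fin n → K) :
    ell F ((∑ a, u a • gen F a) * (∑ a, v a • gen F a) * (∑ a, w a • gen F a)) =
      ∑ d, w d * ∑ b, v b * ∑ a, u a * tens F3 a b d := by
  simp only [Finset.mul_sum, Finset.sum_mul, map_sum, smul_mul_assoc, mul_smul_comm, map_smul,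
    ell_gen F F3 h, smul_eq_mul]

end Concrete

/-- Let `F, G ∈ K[y_1,…,y_n]` be degree-three polynomials with top-degree cubic
forms `F_3, G_3`, such that `A_F` and `A_G` have Hilbert function `{1,n,n,1}`.
Then `A_F ≅ A_G` as `K`-algebras iff `F_3` and `G_3` are projectively
equivalent. -/
theorem aF_iso_iff_top_cubics_proj_equiv
    {K : Type*} [Field K] [IsAlgClosed K] [CharZero K] {n : ℕ}
    (F G F3 G3 : MvPolynomial (Fin n) K)
    (hF3 : F3.IsHomogeneous 3) (hF3ne : F3 ≠ 0) (hFtop : (F - F3).totalDegree ≤ 2)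
    (hG3 : G3.IsHomogeneous 3) (hG3ne : G3 ≠ 0) (hGtop : (G - G3).totalDegree ≤ 2)
    (hF0 : hilbQ (annR F) 0 = 1) (hF1 : hilbQ (annR F) 1 = n)
    (hF2 : hilbQ (annR F) 2 = n) (hFs : hilbQ (annR F) 3 = 1)
    (hFm : mxR K n ^ 4 ≤ annR F)
    (hG0 : hilbQ (annR G) 0 = 1) (hG1 : hilbQ (annR G) 1 = n)
    (hG2 : hilbQ (annR G) 2 = n) (hGs : hilbQ (annR G) 3 = 1)
    (hGm : mxR K n ^ 4 ≤ annR G) :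
    Nonempty ((MvPowerSeries (Fin n) K ⧸ annR F) ≃ₐ[K]
        (MvPowerSeries (Fin n) K ⧸ annR G)) ↔
      projEquiv F3 G3 := by
  have hn : n ≠ 0 := by
    rintro rfl
    apply hF3ne
    rw [MvPolynomial.eq_C_of_isEmpty F3] at hF3 ⊢
    by_contra hne
    have := hF3.inj_right (MvPolynomial.isHomogeneous_C (Fin 0) _) hne
    omega
  obtain ⟨gF, rF⟩ := good hn F hF0 hF1 hF2 hFs hFm
  obtain ⟨gG, rG⟩ := good hn G hG0 hG1 hG2 hGs hGm
  rw [projEquiv_iff hF3 hG3]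
  simp only [← ell_lin F F3 hFtop, ← ell_gen G G3 hGtop]
  constructor
  · rintro ⟨Θ⟩
    exact GoodAlg.forward hn gF gG (gF.nd rF) (gG.nd rG) Θ.symm
  · rintro ⟨φ, c, hc, h⟩
    exact GoodAlg.backward hn gF gG (gF.nd rF) φ c hc h
end

section
/- Let A be an Artinian Gorenstein local K-algebra with Hilbert function {1,2,2,1}. Then A is isomorphic as a K-algebra to exactly one of the following quotients of R = K[[x_1,x_2]]: (a) R/(x_1^3, x_2^2), or (b) R/(x_1 x_2, x_1^3 − x_2^3); in particular these two rings are not isomorphic to each other. -/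
/-- The Hilbert function
`HF_A(i) = dim_K (m^i/m^(i+1)) = dim_K A/m^(i+1) - dim_K A/m^i`
of a local `K`-algebra `A` with maximal ideal `m`. -/
noncomputable def hilbLoc (K : Type*) [Field K] (A : Type*) [CommRing A] [IsLocalRing A]
    [Algebra K A] (i : ℕ) : ℕ :=
  Module.finrank K (A ⧸ (IsLocalRing.maximalIdeal A ^ (i + 1))) -
    Module.finrank K (A ⧸ (IsLocalRing.maximalIdeal A ^ i))

/-- `dim_K` of the socle `(0 : m)` of a local `K`-algebra `A`;
an Artinian local ring `A` is Gorenstein iff this equals `1`. -/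
noncomputable def socDimLoc (K : Type*) [Field K] (A : Type*) [CommRing A] [IsLocalRing A]
    [Algebra K A] : ℕ :=
  Module.finrank K
    ((Submodule.colon (⊥ : Ideal A) (IsLocalRing.maximalIdeal A)).restrictScalars K)

/-- The residue field of the local `K`-algebra `A` is `K` itself,
via the structure map. -/
def residueFieldIsK (K : Type*) [Field K] (A : Type*) [CommRing A] [IsLocalRing A]
    [Algebra K A] : Prop :=
  Function.Bijective (algebraMap K (IsLocalRing.ResidueField A))

/-- The variable `x_i` of `R = K[[x_1,…,x_n]]`. -/
noncomputable def psX {K : Type*} [Field K] {n : ℕ} (i : Fin n) :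
    MvPowerSeries (Fin n) K := MvPowerSeries.X i


theorem aux_split {K : Type*} [Field K] (f : MvPowerSeries (Fin 2) K) :
    ∃ (c : K) (g h : MvPowerSeries (Fin 2) K),
      f = algebraMap K _ c + psX 0 * g + psX 1 * h := by
  classical
  let f0 : MvPowerSeries (Fin 2) K := fun m => if m 0 = 0 ∧ m ≠ 0 then MvPowerSeries.coeff m f else 0
  have hf0 : ∀ m, MvPowerSeries.coeff m f0 = if m 0 = 0 ∧ m ≠ 0 then MvPowerSeries.coeff m f else 0 :=
    fun m => rfl
  have h1 : (MvPowerSeries.X 1 : MvPowerSeries (Fin 2) K) ∣ f0 := by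
    rw [MvPowerSeries.X_dvd_iff]
    intro m hm
    rw [hf0, if_neg]
    rintro ⟨h, h'⟩
    apply h'
    ext i
    fin_cases i
    · simpa using h
    · simpa using hm
  have h2 : (MvPowerSeries.X 0 : MvPowerSeries (Fin 2) K) ∣
      f - algebraMap K _ (MvPowerSeries.coeff 0 f) - f0 := by
    rw [MvPowerSeries.X_dvd_iff]
    intro m hm
    rw [map_sub, map_sub, hf0, MvPowerSeries.algebraMap_apply, MvPowerSeries.coeff_C]
    by_cases h : m = 0
    · simp [h]
    · simp [h, hm]
  obtain ⟨h, hh⟩ := h1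
  obtain ⟨g, hg⟩ := h2
  refine ⟨MvPowerSeries.coeff 0 f, g, h, ?_⟩
  unfold psX
  linear_combination hg + hh

theorem aux_quot {K : Type*} [Field K] (I : Ideal (MvPowerSeries (Fin 2) K))
    (b : MvPowerSeries (Fin 2) K ⧸ I) :
    ∃ (c : K) (g h : MvPowerSeries (Fin 2) K ⧸ I),
      b = algebraMap K _ c + Ideal.Quotient.mk I (psX 0) * g + Ideal.Quotient.mk I (psX 1) * h := by
  obtain ⟨f, rfl⟩ := Ideal.Quotient.mk_surjective b
  obtain ⟨c, g, h, e⟩ := aux_split f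
  refine ⟨c, Ideal.Quotient.mk I g, Ideal.Quotient.mk I h, ?_⟩
  conv_lhs => rw [e]
  simp only [map_add, map_mul]
  rfl

theorem aux_six_a {K B : Type*} [Field K] [CommRing B] [Algebra K B] (x y : B)
    (H : ∀ b : B, ∃ (c : K) (g h : B), b = algebraMap K B c + x * g + y * h)
    (hx : x ^ 3 = 0) (hy : y ^ 2 = 0) (b : B) :
    ∃ c : Fin 6 → K, b = ∑ i, c i • (![1, x, x ^ 2, y, x * y, x ^ 2 * y] i) := by
  obtain ⟨c0, g, h, e⟩ := H b
  obtain ⟨c1, g1, g2, e1⟩ := H g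
  obtain ⟨c2, g3, g4, e2⟩ := H g1
  obtain ⟨c3, h1, h2, e3⟩ := H h
  obtain ⟨c4, h3, h4, e4⟩ := H (h1 + g2)
  obtain ⟨c5, h5, h6, e5⟩ := H (h3 + g4)
  refine ⟨![c0, c1, c2, c3, c4, c5], ?_⟩
  simp only [Fin.sum_univ_succ, Algebra.smul_def]
  simp
  linear_combination e + x * e1 + x ^ 2 * e2 + y * e3 + x * y * e4 + x ^ 2 * y * e5 +
    hx * (g3 + y * h5) + hy * (h2 + x * h4 + x ^ 2 * h6)

theorem aux_six_b {K B : Type*} [Field K] [CommRing B] [Algebra K B] (x y : B)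
    (H : ∀ b : B, ∃ (c : K) (g h : B), b = algebraMap K B c + x * g + y * h)
    (hx : x * y = 0) (hy : x ^ 3 = y ^ 3) (b : B) :
    ∃ c : Fin 6 → K, b = ∑ i, c i • (![1, x, x ^ 2, x ^ 3, y, y ^ 2] i) := by
  obtain ⟨c0, g, h, e⟩ := H b
  obtain ⟨c1, g1, g2, e1⟩ := H g
  obtain ⟨c2, g3, g4, e2⟩ := H g1
  obtain ⟨c3, h1, h2, e3⟩ := H h
  obtain ⟨c4, h3, h4, e4⟩ := H h2
  obtain ⟨c5, h5, h6, e5⟩ := H (g3 + h4)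
  refine ⟨![c0, c1, c2, c5, c3, c4], ?_⟩
  simp only [Fin.sum_univ_succ, Algebra.smul_def]
  simp
  linear_combination e + x * e1 + x ^ 2 * e2 + y * e3 + y ^ 2 * e4 + x ^ 3 * e5 +
    hx * (g2 + x * g4 + h1 + y * h3 + x ^ 2 * h6 + y ^ 2 * h5) + hy * (-h4 + x * h5)

theorem aux_hom {K A : Type*} [Field K] [CommRing A] [Algebra K A] (x y : A)
    (hx : IsNilpotent x) (hy : IsNilpotent y) :
    ∃ φ : MvPowerSeries (Fin 2) K →ₐ[K] A, φ (psX 0) = x ∧ φ (psX 1) = y := by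
  let : UniformSpace K := ⊥
  let : UniformSpace A := ⊥
  have : DiscreteUniformity K := ⟨rfl⟩
  have : DiscreteUniformity A := ⟨rfl⟩
  have : ContinuousSMul K A := ⟨continuous_of_discreteTopology⟩
  have ha : MvPowerSeries.HasEval (![x, y]) := by
    refine ⟨?_, ?_⟩
    · intro s
      have : IsNilpotent (![x, y] s) := by fin_cases s <;> simpa
      obtain ⟨n, hn⟩ := this
      refine tendsto_const_nhds.congr' ?_
      filter_upwards [Filter.eventually_ge_atTop n] with k hk
      exact (pow_eq_zero_of_le hk hn).symm
    · rw [Filter.cofinite_eq_bot]; exact Filter.tendsto_bot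
  refine ⟨MvPowerSeries.aeval ha, ?_, ?_⟩
  · simpa [psX] using MvPowerSeries.aeval_coe ha (MvPolynomial.X 0)
  · simpa [psX] using MvPowerSeries.aeval_coe ha (MvPolynomial.X 1)

theorem aux_iso {K A : Type*} [Field K] [CommRing A] [Algebra K A] [Module.Finite K A]
    (hdim : Module.finrank K A = 6) (I : Ideal (MvPowerSeries (Fin 2) K))
    (φ : MvPowerSeries (Fin 2) K →ₐ[K] A) (hφ : Function.Surjective φ)
    (hI : ∀ a ∈ I, φ a = 0)
    (b : Fin 6 → MvPowerSeries (Fin 2) K ⧸ I)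
    (hb : ∀ q, ∃ c : Fin 6 → K, q = ∑ i, c i • b i) :
    Nonempty (A ≃ₐ[K] (MvPowerSeries (Fin 2) K ⧸ I)) := by
  let ψ : (MvPowerSeries (Fin 2) K ⧸ I) →ₐ[K] A := Ideal.Quotient.liftₐ I φ hI
  have hψ : Function.Surjective ψ := by
    intro a
    obtain ⟨f, rfl⟩ := hφ a
    exact ⟨Ideal.Quotient.mk I f, rfl⟩
  let L : (Fin 6 → K) →ₗ[K] (MvPowerSeries (Fin 2) K ⧸ I) := Fintype.linearCombination K b
  have hL : Function.Surjective L := by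
    intro q
    obtain ⟨c, hc⟩ := hb q
    exact ⟨c, by rw [hc]; simp [L, Fintype.linearCombination_apply]⟩
  have h1 : Function.Injective (ψ.toLinearMap ∘ₗ L) := by
    rw [LinearMap.injective_iff_surjective_of_finrank_eq_finrank (by simp [hdim])]
    exact hψ.comp hL
  have h2 : Function.Injective ψ := by
    intro p q hpq
    obtain ⟨u, rfl⟩ := hL p
    obtain ⟨v, rfl⟩ := hL q
    rw [h1 hpq]
  exact ⟨(AlgEquiv.ofBijective ψ ⟨h2, hψ⟩).symm⟩

open IsLocalRing in
theorem aux_dims {K A : Type*} [Field K] [CommRing A] [IsLocalRing A] [Algebra K A]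
    (h0 : hilbLoc K A 0 = 1) (h1 : hilbLoc K A 1 = 2) (h2 : hilbLoc K A 2 = 2)
    (h3 : hilbLoc K A 3 = 1) (hm4 : maximalIdeal A ^ 4 = ⊥) :
    Module.Finite K A ∧ Module.finrank K A = 6 ∧
    Module.finrank K ((maximalIdeal A).restrictScalars K) = 5 ∧
    Module.finrank K ((maximalIdeal A ^ 2).restrictScalars K) = 3 ∧
    Module.finrank K ((maximalIdeal A ^ 3).restrictScalars K) = 1 := by
  unfold hilbLoc at h0 h1 h2 h3
  have d0 : Module.finrank K (A ⧸ (maximalIdeal A ^ 0)) = 0 := by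
    have : Subsingleton (A ⧸ (maximalIdeal A ^ 0)) := by
      rw [Ideal.Quotient.subsingleton_iff]; simp
    exact Module.finrank_zero_of_subsingleton
  change Module.finrank K (A ⧸ (maximalIdeal A ^ 1)) - _ = 1 at h0
  change Module.finrank K (A ⧸ (maximalIdeal A ^ 2)) - _ = 2 at h1
  change Module.finrank K (A ⧸ (maximalIdeal A ^ 3)) - _ = 2 at h2
  change Module.finrank K (A ⧸ (maximalIdeal A ^ 4)) - _ = 1 at h3
  have e : (A ⧸ (maximalIdeal A ^ 4)) ≃ₗ[K] A := by
    rw [hm4]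
    exact ((Submodule.quotEquivOfEqBot (⊥ : Ideal A) rfl).restrictScalars K)
  have hf : Module.Finite K (A ⧸ (maximalIdeal A ^ 4)) :=
    Module.finite_of_finrank_pos (by omega)
  have hfA : Module.Finite K A := Module.Finite.equiv e
  have e6 := e.finrank_eq
  have key : ∀ I : Ideal A, Module.finrank K (A ⧸ I) + Module.finrank K (I.restrictScalars K)
      = Module.finrank K A := by
    intro I
    rw [← Submodule.finrank_quotient_add_finrank (I.restrictScalars K),
      (Submodule.Quotient.restrictScalarsEquiv K I).finrank_eq]
  have k1 := key (maximalIdeal A ^ 1)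
  have k2 := key (maximalIdeal A ^ 2)
  have k3 := key (maximalIdeal A ^ 3)
  have p1 : Module.finrank K ((maximalIdeal A).restrictScalars K) =
    Module.finrank K ((maximalIdeal A ^ 1).restrictScalars K) := by rw [pow_one]
  refine ⟨hfA, ?_, ?_, ?_, ?_⟩ <;> omega

/-- dimension bound -/
theorem aux_le {K V : Type*} [Field K] [AddCommGroup V] [Module K V] [Module.Finite K V]
    (N M : Submodule K V) (x : V) (h : ∀ v ∈ M, ∃ c : K, v - c • x ∈ N) :
    Module.finrank K M ≤ Module.finrank K N + 1 := by
  have h1 : M ≤ N ⊔ Submodule.span K {x} := by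
    intro v hv
    obtain ⟨c, hc⟩ := h v hv
    rw [Submodule.mem_sup]
    exact ⟨_, hc, c • x, Submodule.smul_mem _ _ (Submodule.mem_span_singleton_self x), by abel⟩
  have h2 := Submodule.finrank_mono h1
  have h3 := Submodule.finrank_add_le_finrank_add_finrank N (Submodule.span K {x})
  have h4 := finrank_span_le_card (R := K) ({x} : Set V)
  simp at h4
  omega

theorem aux_two {K V : Type*} [Field K] [AddCommGroup V] [Module K V] [Module.Finite K V]
    (N M : Submodule K V) (hNM : N ≤ M) (h : Module.finrank K M = Module.finrank K N + 2) :
    ∃ x ∈ M, ∃ y ∈ M, ∀ v ∈ M, ∃ c d : K, v - c • x - d • y ∈ N := by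
  have ex : ∃ x ∈ M, x ∉ N := by
    by_contra! hc
    have := Submodule.finrank_mono (show M ≤ N from hc)
    omega
  obtain ⟨x, hx, hxN⟩ := ex
  have ey : ∃ y ∈ M, y ∉ N ⊔ Submodule.span K {x} := by
    by_contra! hc
    have := aux_le N M x (fun v hv => by
      obtain ⟨n, hn, z, hz, e⟩ := Submodule.mem_sup.1 (hc v hv)
      obtain ⟨c, rfl⟩ := Submodule.mem_span_singleton.1 hz
      exact ⟨c, by rw [← e]; simpa using hn⟩)
    omega
  obtain ⟨y, hy, hyN⟩ := ey
  refine ⟨x, hx, y, hy, ?_⟩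
  have l1 : N < N ⊔ Submodule.span K {x} := by
    refine lt_of_le_of_ne le_sup_left fun e => hxN ?_
    rw [e]
    exact Submodule.mem_sup_right (Submodule.mem_span_singleton_self x)
  have l2 : N ⊔ Submodule.span K {x} < (N ⊔ Submodule.span K {x}) ⊔ Submodule.span K {y} := by
    refine lt_of_le_of_ne le_sup_left fun e => hyN ?_
    rw [e]
    exact Submodule.mem_sup_right (Submodule.mem_span_singleton_self y)
  have l3 : (N ⊔ Submodule.span K {x}) ⊔ Submodule.span K {y} ≤ M := by
    simp only [sup_le_iff, Submodule.span_singleton_le_iff_mem]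
    exact ⟨⟨hNM, hx⟩, hy⟩
  have := Submodule.finrank_lt_finrank_of_lt l1
  have := Submodule.finrank_lt_finrank_of_lt l2
  have e := Submodule.eq_of_le_of_finrank_le l3 (by omega)
  intro v hv
  rw [← e] at hv
  obtain ⟨w, hw, z, hz, rfl⟩ := Submodule.mem_sup.1 hv
  obtain ⟨n, hn, z', hz', rfl⟩ := Submodule.mem_sup.1 hw
  obtain ⟨c, rfl⟩ := Submodule.mem_span_singleton.1 hz
  obtain ⟨d, rfl⟩ := Submodule.mem_span_singleton.1 hz'
  refine ⟨d, c, ?_⟩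
  convert hn using 1
  abel

/-- three vectors in a two dimensional quotient are dependent -/
theorem aux_rel {K V : Type*} [Field K] [AddCommGroup V] [Module K V] [Module.Finite K V]
    (N M : Submodule K V) (hNM : N ≤ M) (h : Module.finrank K M = Module.finrank K N + 2)
    (u v w : V) (hu : u ∈ M) (hv : v ∈ M) (hw : w ∈ M) :
    ∃ a b c : K, (a ≠ 0 ∨ b ≠ 0 ∨ c ≠ 0) ∧ a • u + b • v + c • w ∈ N := by
  obtain ⟨x, hx, y, hy, H⟩ := aux_two N M hNM h
  obtain ⟨u1, u2, hu⟩ := H u hu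
  obtain ⟨v1, v2, hv⟩ := H v hv
  obtain ⟨w1, w2, hw⟩ := H w hw
  have dep : ∃ a b c : K, (a ≠ 0 ∨ b ≠ 0 ∨ c ≠ 0) ∧ a * u1 + b * v1 + c * w1 = 0 ∧
      a * u2 + b * v2 + c * w2 = 0 := by
    let L : (Fin 3 → K) →ₗ[K] (Fin 2 → K) := (!![u1, v1, w1; u2, v2, w2]).mulVecLin
    obtain ⟨z, hz, hz0⟩ := (Submodule.ne_bot_iff _).1
      (LinearMap.ker_ne_bot_of_finrank_lt (f := L) (by simp))
    refine ⟨z 0, z 1, z 2, ?_, ?_, ?_⟩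
    · by_contra! hc
      apply hz0
      ext i
      fin_cases i
      · exact hc.1
      · exact hc.2.1
      · exact hc.2.2
    · have := congrFun (LinearMap.mem_ker.1 hz) 0
      simp [L, Matrix.mulVec, dotProduct, Fin.sum_univ_succ] at this
      linear_combination this
    · have := congrFun (LinearMap.mem_ker.1 hz) 1
      simp [L, Matrix.mulVec, dotProduct, Fin.sum_univ_succ] at this
      linear_combination this
  obtain ⟨a, b, c, hne, e1, e2⟩ := dep
  refine ⟨a, b, c, hne, ?_⟩
  have := N.add_mem (N.add_mem (N.smul_mem a hu) (N.smul_mem b hv)) (N.smul_mem c hw)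
  convert this using 1
  have : (a * u1 + b * v1 + c * w1) • x + (a * u2 + b * v2 + c * w2) • y = 0 := by simp [e1, e2]
  linear_combination (norm := module) this

open IsLocalRing

/-- the facts about `A` that are used -/
structure AuxFacts (K A : Type*) [Field K] [CommRing A] [IsLocalRing A] [Algebra K A] : Prop where
  hm4 : maximalIdeal A ^ 4 = ⊥
  res : ∀ a : A, ∃ c : K, a - algebraMap K A c ∈ maximalIdeal A
  soc : ∀ a : A, (∀ b ∈ maximalIdeal A, a * b = 0) → a ∈ maximalIdeal A ^ 3
  one : ∀ p ∈ maximalIdeal A ^ 3, p ≠ 0 → ∀ q ∈ maximalIdeal A ^ 3, ∃ c : K, q = c • p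
  ex3 : ∃ p ∈ maximalIdeal A ^ 3, p ≠ 0
  not1 : ∀ x : A, ¬ ∀ v ∈ maximalIdeal A, ∃ c : K, v - c • x ∈ maximalIdeal A ^ 2
  not2 : ∀ x : A, ¬ ∀ v ∈ maximalIdeal A ^ 2, ∃ c : K, v - c • x ∈ maximalIdeal A ^ 3

/-- `x, y` span `m / m^2` -/
def AuxGen (K : Type*) {A : Type*} [Field K] [CommRing A] [IsLocalRing A] [Algebra K A]
    (x y : A) : Prop :=
  x ∈ maximalIdeal A ∧ y ∈ maximalIdeal A ∧
    ∀ a ∈ maximalIdeal A, ∃ c d : K, a - c • x - d • y ∈ maximalIdeal A ^ 2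

section
variable {K A : Type*} [Field K] [CommRing A] [IsLocalRing A] [Algebra K A]

theorem aux_facts
    (hres : residueFieldIsK K A) (hGor : socDimLoc K A = 1)
    (hm4 : maximalIdeal A ^ 4 = ⊥) (hfin : Module.Finite K A)
    (d1 : Module.finrank K ((maximalIdeal A).restrictScalars K) = 5)
    (d2 : Module.finrank K ((maximalIdeal A ^ 2).restrictScalars K) = 3)
    (d3 : Module.finrank K ((maximalIdeal A ^ 3).restrictScalars K) = 1) : AuxFacts K A where
  hm4 := hm4
  res a := by
    obtain ⟨c, hc⟩ := hres.2 (residue A a)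
    refine ⟨c, ?_⟩
    rw [← residue_eq_zero_iff, map_sub, ← hc, sub_eq_zero]
    rfl
  soc := by
    have hle : (maximalIdeal A ^ 3).restrictScalars K ≤
        (Submodule.colon (⊥ : Ideal A) (maximalIdeal A)).restrictScalars K := by
      intro a ha
      simp only [Submodule.restrictScalars_mem] at ha ⊢
      rw [Submodule.mem_colon]
      intro p hp
      rw [← hm4]
      exact Ideal.mul_mem_mul ha hp
    have e := Submodule.eq_of_le_of_finrank_le hle (by rw [d3]; exact hGor.le)
    intro a ha
    have : a ∈ (Submodule.colon (⊥ : Ideal A) (maximalIdeal A)).restrictScalars K := by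
      simp only [Submodule.restrictScalars_mem]
      rw [Submodule.mem_colon]
      intro p hp
      simpa using ha p hp
    rw [← e] at this
    exact this
  one p hp hp0 q hq := by
    obtain ⟨c, hc⟩ := (finrank_eq_one_iff_of_nonzero'
      (⟨p, hp⟩ : (maximalIdeal A ^ 3).restrictScalars K)
      (by simpa [Subtype.ext_iff] using hp0)).1 d3 ⟨q, hq⟩
    exact ⟨c, (congrArg Subtype.val hc).symm⟩
  ex3 := by
    have : (maximalIdeal A ^ 3).restrictScalars K ≠ ⊥ := by
      intro h
      rw [h] at d3
      simp at d3
    obtain ⟨p, hp, h0⟩ := (Submodule.ne_bot_iff _).1 this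
    exact ⟨p, hp, h0⟩
  not1 x h := by
    have := aux_le ((maximalIdeal A ^ 2).restrictScalars K) ((maximalIdeal A).restrictScalars K) x
      (by simpa using h)
    omega
  not2 x h := by
    have := aux_le ((maximalIdeal A ^ 3).restrictScalars K)
      ((maximalIdeal A ^ 2).restrictScalars K) x (by simpa using h)
    omega

theorem aux_mm2 {a b : A} (ha : a ∈ maximalIdeal A) (hb : b ∈ maximalIdeal A) :
    a * b ∈ maximalIdeal A ^ 2 := by
  rw [pow_two]; exact Ideal.mul_mem_mul ha hb

theorem aux_mm3 {a b : A} (ha : a ∈ maximalIdeal A) (hb : b ∈ maximalIdeal A ^ 2) :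
    a * b ∈ maximalIdeal A ^ 3 := by
  rw [pow_succ']; exact Ideal.mul_mem_mul ha hb

theorem AuxFacts.z13 (F : AuxFacts K A) {a b : A} (ha : a ∈ maximalIdeal A)
    (hb : b ∈ maximalIdeal A ^ 3) : a * b = 0 := by
  have : a * b ∈ maximalIdeal A ^ 4 := by
    rw [pow_succ']; exact Ideal.mul_mem_mul ha hb
  rw [F.hm4] at this
  simpa using this

theorem AuxFacts.z22 (F : AuxFacts K A) {a b : A} (ha : a ∈ maximalIdeal A ^ 2)
    (hb : b ∈ maximalIdeal A ^ 2) : a * b = 0 := by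
  have : a * b ∈ maximalIdeal A ^ 4 := by
    rw [show 4 = 2 + 2 from rfl, pow_add]; exact Ideal.mul_mem_mul ha hb
  rw [F.hm4] at this
  simpa using this

theorem aux_smul {I : Ideal A} (c : K) {a : A} (ha : a ∈ I) : c • a ∈ I :=
  (I.restrictScalars K).smul_mem c ha

theorem AuxGen.m2 {x y : A} (G : AuxGen K x y) : ∀ a ∈ maximalIdeal A ^ 2,
    ∃ c d e : K, a - c • x ^ 2 - d • (x * y) - e • y ^ 2 ∈ maximalIdeal A ^ 3 := by
  obtain ⟨hx, hy, G⟩ := G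
  intro a ha
  rw [pow_two] at ha
  refine Submodule.mul_induction_on ha ?_ ?_
  · intro a ha b hb
    obtain ⟨c, d, hr⟩ := G a ha
    obtain ⟨c', d', hr'⟩ := G b hb
    refine ⟨c * c', c * d' + d * c', d * d', ?_⟩
    have h1 := aux_mm3 hb hr
    have h2 := aux_mm3 (Ideal.add_mem _ (aux_smul c hx) (aux_smul d hy)) hr'
    convert Ideal.add_mem _ h1 h2 using 1
    simp only [Algebra.smul_def, map_add, map_mul]
    ring
  · rintro a b ⟨c, d, e, h⟩ ⟨c', d', e', h'⟩
    refine ⟨c + c', d + d', e + e', ?_⟩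
    convert Ideal.add_mem _ h h' using 1
    module

theorem AuxGen.m3 (F : AuxFacts K A) {x y : A} (G : AuxGen K x y) : ∀ a ∈ maximalIdeal A ^ 3,
    ∃ c d e f : K, a = c • x ^ 3 + d • (x ^ 2 * y) + e • (x * y ^ 2) + f • y ^ 3 := by
  have G2 := G.m2
  obtain ⟨hx, hy, G⟩ := G
  intro a ha
  rw [pow_succ] at ha
  refine Submodule.mul_induction_on ha ?_ ?_
  · intro a ha b hb
    obtain ⟨c, d, e, hr⟩ := G2 a ha
    obtain ⟨c', d', hr'⟩ := G b hb
    refine ⟨c * c', c * d' + d * c', d * d' + e * c', e * d', ?_⟩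
    have h1 := F.z13 hb hr
    have hx2 : x ^ 2 ∈ maximalIdeal A ^ 2 := Ideal.pow_mem_pow hx 2
    have hy2 : y ^ 2 ∈ maximalIdeal A ^ 2 := Ideal.pow_mem_pow hy 2
    have h2 := F.z22 (Ideal.add_mem _ (Ideal.add_mem _ (aux_smul c hx2) (aux_smul d (aux_mm2 hx hy)))
      (aux_smul e hy2)) hr'
    simp only [Algebra.smul_def, map_add, map_mul] at h1 h2 ⊢
    linear_combination h1 + h2
  · rintro a b ⟨c, d, e, f, h⟩ ⟨c', d', e', f', h'⟩
    refine ⟨c + c', d + d', e + e', f + f', ?_⟩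
    rw [h, h']
    module

theorem AuxGen.top (F : AuxFacts K A) {x y : A} (G : AuxGen K x y) (S : Subalgebra K A)
    (hx : x ∈ S) (hy : y ∈ S) (a : A) : a ∈ S := by
  have k3 : ∀ a ∈ maximalIdeal A ^ 3, a ∈ S := by
    intro a ha
    obtain ⟨c, d, e, f, rfl⟩ := G.m3 F a ha
    have s1 := S.smul_mem (S.pow_mem hx 3) c
    have s2 := S.smul_mem (S.mul_mem (S.pow_mem hx 2) hy) d
    have s3 := S.smul_mem (S.mul_mem hx (S.pow_mem hy 2)) e
    have s4 := S.smul_mem (S.pow_mem hy 3) f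
    exact S.add_mem (S.add_mem (S.add_mem s1 s2) s3) s4
  have k2 : ∀ a ∈ maximalIdeal A ^ 2, a ∈ S := by
    intro a ha
    obtain ⟨c, d, e, h⟩ := G.m2 a ha
    have s1 := S.smul_mem (S.pow_mem hx 2) c
    have s2 := S.smul_mem (S.mul_mem hx hy) d
    have s3 := S.smul_mem (S.pow_mem hy 2) e
    convert S.add_mem (S.add_mem (S.add_mem (k3 _ h) s1) s2) s3 using 1
    abel
  have k1 : ∀ a ∈ maximalIdeal A, a ∈ S := by
    intro a ha
    obtain ⟨c, d, h⟩ := G.2.2 a ha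
    convert S.add_mem (S.add_mem (k2 _ h) (S.smul_mem hx c)) (S.smul_mem hy d) using 1
    abel
  obtain ⟨c, hc⟩ := F.res a
  convert S.add_mem (k1 _ hc) (S.algebraMap_mem c) using 1
  abel

theorem AuxGen.change {x y x' y' : A} (G : AuxGen K x y)
    (hx' : x' ∈ maximalIdeal A) (hy' : y' ∈ maximalIdeal A)
    (hx : ∃ c d : K, x - c • x' - d • y' ∈ maximalIdeal A ^ 2)
    (hy : ∃ c d : K, y - c • x' - d • y' ∈ maximalIdeal A ^ 2) : AuxGen K x' y' := by
  refine ⟨hx', hy', fun a ha => ?_⟩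
  obtain ⟨c, d, h⟩ := G.2.2 a ha
  obtain ⟨p, q, hx⟩ := hx
  obtain ⟨r, s, hy⟩ := hy
  refine ⟨c * p + d * r, c * q + d * s, ?_⟩
  convert Ideal.add_mem _ h (Ideal.add_mem _ (aux_smul c hx) (aux_smul d hy)) using 1
  module

theorem aux_conv {x y : A} (hx : x ∈ maximalIdeal A) (hy : y ∈ maximalIdeal A)
    (H : ∀ b : A, ∃ (c : K) (g h : A), b = algebraMap K A c + x * g + y * h) : AuxGen K x y := by
  have H' : ∀ b : A, ∃ c : K, b - algebraMap K A c ∈ maximalIdeal A := by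
    intro b
    obtain ⟨c, g, h, e⟩ := H b
    refine ⟨c, ?_⟩
    convert Ideal.add_mem _ (Ideal.mul_mem_right g _ hx) (Ideal.mul_mem_right h _ hy) using 1
    rw [e]; ring
  refine ⟨hx, hy, fun a ha => ?_⟩
  obtain ⟨c, g, h, e⟩ := H a
  have hc : algebraMap K A c ∈ maximalIdeal A := by
    convert Ideal.sub_mem _ ha
      (Ideal.add_mem _ (Ideal.mul_mem_right g _ hx) (Ideal.mul_mem_right h _ hy)) using 1
    rw [e]; ring
  have hc0 : c = 0 := by
    by_contra h0
    exact (mem_maximalIdeal _).1 hc ((Ne.isUnit h0).map (algebraMap K A))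
  subst hc0
  obtain ⟨p, hp⟩ := H' g
  obtain ⟨q, hq⟩ := H' h
  refine ⟨p, q, ?_⟩
  convert Ideal.add_mem _ (aux_mm2 hx hp) (aux_mm2 hy hq) using 1
  simp only [Algebra.smul_def]
  rw [e, map_zero]; ring

theorem aux_disj (F : AuxFacts K A) {x y u v : A} (G : AuxGen K x y) (hy2 : y ^ 2 = 0)
    (G' : AuxGen K u v) (huv : u * v = 0) (huv3 : u ^ 3 = v ^ 3) : False := by
  have hu3 : u ^ 3 ≠ 0 := by
    intro h0
    obtain ⟨p, hp, hp0⟩ := F.ex3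
    obtain ⟨c, d, e, f, h⟩ := G'.m3 F p hp
    apply hp0
    rw [h, ← huv3, h0, show u ^ 2 * v = u * (u * v) by ring, show u * v ^ 2 = (u * v) * v by ring, huv]
    simp
  obtain ⟨a, b, hr⟩ := G'.2.2 y G.2.1
  have hu := G'.1
  have hv := G'.2.1
  have hr1 : y - a • u - b • v ∈ maximalIdeal A := Ideal.pow_le_self two_ne_zero hr
  have key : ∀ w ∈ maximalIdeal A, w * (y - a • u - b • v) * (y + a • u + b • v) = 0 := by
    intro w hw
    have hs : y + a • u + b • v ∈ maximalIdeal A :=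
      Ideal.add_mem _ (Ideal.add_mem _ G.2.1 (aux_smul a hu)) (aux_smul b hv)
    rw [mul_comm]
    exact F.z13 hs (aux_mm3 hw hr)
  have ku := key u hu
  have kv := key v hv
  simp only [Algebra.smul_def] at ku kv
  have ha : a = 0 := by
    have : (a ^ 2) • u ^ 3 = 0 := by
      simp only [Algebra.smul_def, map_pow]
      linear_combination -ku + u * hy2 -
        huv * ((algebraMap K A b) ^ 2 * v + 2 * algebraMap K A a * algebraMap K A b * u)
    simpa [hu3] using this
  have hb : b = 0 := by
    have : (b ^ 2) • u ^ 3 = 0 := by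
      simp only [Algebra.smul_def, map_pow]
      linear_combination -kv + v * hy2 + (algebraMap K A b) ^ 2 * huv3 -
        huv * ((algebraMap K A a) ^ 2 * u + 2 * algebraMap K A a * algebraMap K A b * v)
    simpa [hu3] using this
  subst ha hb
  simp only [zero_smul, sub_zero] at hr
  apply F.not1 x
  intro w hw
  obtain ⟨c, d, h⟩ := G.2.2 w hw
  refine ⟨c, ?_⟩
  convert Ideal.add_mem _ h (aux_smul d hr) using 1
  abel

theorem aux_case1 [IsAlgClosed K] (F : AuxFacts K A) {x y : A} (G : AuxGen K x y)
    (hxy : x * y ∈ maximalIdeal A ^ 3) :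
    ∃ x' y' : A, AuxGen K x' y' ∧ x' * y' = 0 ∧ x' ^ 3 = y' ^ 3 := by
  have hx := G.1
  have hy := G.2.1
  have hx2 : x ^ 2 ∈ maximalIdeal A ^ 2 := Ideal.pow_mem_pow hx 2
  have hy2 : y ^ 2 ∈ maximalIdeal A ^ 2 := Ideal.pow_mem_pow hy 2
  have hx3m : x ^ 3 ∈ maximalIdeal A ^ 3 := Ideal.pow_mem_pow hx 3
  have hy3m : y ^ 3 ∈ maximalIdeal A ^ 3 := Ideal.pow_mem_pow hy 3
  have hxxy := F.z13 hx hxy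
  have hxyy := F.z13 hy hxy
  have hx3 : x ^ 3 ≠ 0 := by
    intro h0
    have : x ^ 2 ∈ maximalIdeal A ^ 3 := by
      apply F.soc
      intro b hb
      obtain ⟨c, d, h⟩ := G.2.2 b hb
      have := F.z22 hx2 h
      simp only [Algebra.smul_def] at this
      linear_combination this + algebraMap K A c * h0 + algebraMap K A d * hxxy
    apply F.not2 (y ^ 2)
    intro v hv
    obtain ⟨c, d, e, h⟩ := G.m2 v hv
    refine ⟨e, ?_⟩
    convert Ideal.add_mem _ h (Ideal.add_mem _ (aux_smul c this) (aux_smul d hxy)) using 1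
    abel
  have hy3 : y ^ 3 ≠ 0 := by
    intro h0
    have : y ^ 2 ∈ maximalIdeal A ^ 3 := by
      apply F.soc
      intro b hb
      obtain ⟨c, d, h⟩ := G.2.2 b hb
      have := F.z22 hy2 h
      simp only [Algebra.smul_def] at this
      linear_combination this + algebraMap K A d * h0 + algebraMap K A c * hxyy
    apply F.not2 (x ^ 2)
    intro v hv
    obtain ⟨c, d, e, h⟩ := G.m2 v hv
    refine ⟨c, ?_⟩
    convert Ideal.add_mem _ h (Ideal.add_mem _ (aux_smul e this) (aux_smul d hxy)) using 1
    abel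
  obtain ⟨a, ha⟩ := F.one _ hx3m hx3 _ hxy
  obtain ⟨c, hc⟩ := F.one _ hx3m hx3 _ hy3m
  have hc0 : c ≠ 0 := by
    rintro rfl
    exact hy3 (by rw [hc, zero_smul])
  obtain ⟨t, ht⟩ := IsAlgClosed.exists_pow_nat_eq c (n := 3) (by norm_num)
  have ht0 : t ≠ 0 := by
    rintro rfl
    apply hc0
    rw [← ht]; simp
  have hy'm : y - a • x ^ 2 ∈ maximalIdeal A :=
    Ideal.sub_mem _ hy (aux_smul a (Ideal.pow_mem_of_mem _ hx 2 (by norm_num)))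
  refine ⟨t • x, y - a • x ^ 2, ?_, ?_, ?_⟩
  · refine G.change (aux_smul t hx) hy'm ⟨t⁻¹, 0, ?_⟩ ⟨0, 1, ?_⟩
    · rw [smul_smul, inv_mul_cancel₀ ht0]
      simp
    · convert aux_smul a hx2 using 1
      module
  · simp only [Algebra.smul_def] at ha ⊢
    linear_combination algebraMap K A t * ha
  · have h1 := F.z22 hx2 hy2
    have h2 := F.z22 hx2 hx2
    rw [← ht] at hc
    simp only [Algebra.smul_def, map_pow] at hc ha ⊢
    set a' := algebraMap K A a
    linear_combination -hc + 3 * a' * h1 + (-3 * a' ^ 2 * y + a' ^ 3 * x ^ 2) * h2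

theorem aux_case2 [CharZero K] (F : AuxFacts K A) {x y : A} (G : AuxGen K x y)
    (hyy : y ^ 2 ∈ maximalIdeal A ^ 3) :
    ∃ x' y' : A, AuxGen K x' y' ∧ x' ^ 3 = 0 ∧ y' ^ 2 = 0 := by
  have hx := G.1
  have hy := G.2.1
  have hx2 : x ^ 2 ∈ maximalIdeal A ^ 2 := Ideal.pow_mem_pow hx 2
  have hx3m : x ^ 3 ∈ maximalIdeal A ^ 3 := Ideal.pow_mem_pow hx 3
  have hxxym : x ^ 2 * y ∈ maximalIdeal A ^ 3 := by
    rw [mul_comm]; exact aux_mm3 hy hx2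
  have hxym := aux_mm2 hx hy
  have hxyy := F.z13 hx hyy
  have hyyy := F.z13 hy hyy
  have hxxy : x ^ 2 * y ≠ 0 := by
    intro h0
    have : x * y ∈ maximalIdeal A ^ 3 := by
      apply F.soc
      intro b hb
      obtain ⟨c, d, h⟩ := G.2.2 b hb
      have := F.z22 hxym h
      simp only [Algebra.smul_def] at this
      linear_combination this + algebraMap K A c * h0 + algebraMap K A d * hxyy
    apply F.not2 (x ^ 2)
    intro v hv
    obtain ⟨c, d, e, h⟩ := G.m2 v hv
    refine ⟨c, ?_⟩
    convert Ideal.add_mem _ h (Ideal.add_mem _ (aux_smul d this) (aux_smul e hyy)) using 1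
    abel
  obtain ⟨a, ha⟩ := F.one _ hxxym hxxy _ hx3m
  obtain ⟨b, hb⟩ := F.one _ hxxym hxxy _ hyy
  obtain ⟨p, rfl⟩ : ∃ p : K, a = 3 * p := ⟨a / 3, by field_simp⟩
  obtain ⟨q, rfl⟩ : ∃ q : K, b = 2 * q := ⟨b / 2, by field_simp⟩
  refine ⟨x - p • y, y - q • x ^ 2, ?_, ?_, ?_⟩
  · refine G.change (Ideal.sub_mem _ hx (aux_smul p hy)) (Ideal.sub_mem _ hy (aux_smul q
      (Ideal.pow_mem_of_mem _ hx 2 (by norm_num)))) ⟨1, p, ?_⟩ ⟨0, 1, ?_⟩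
    · convert aux_smul (p * q) hx2 using 1
      module
    · convert aux_smul q hx2 using 1
      module
  · simp only [Algebra.smul_def, map_mul, map_ofNat] at ha hb ⊢
    set p' := algebraMap K A p
    linear_combination ha + 3 * p' ^ 2 * hxyy - p' ^ 3 * hyyy
  · have h2 := F.z22 hx2 hx2
    simp only [Algebra.smul_def, map_mul, map_ofNat] at ha hb ⊢
    set q' := algebraMap K A q
    linear_combination hb + q' ^ 2 * h2

theorem aux_cases [IsAlgClosed K] [CharZero K] (F : AuxFacts K A) {x y : A} (G : AuxGen K x y)
    (R : ∃ a b c : K, (a ≠ 0 ∨ b ≠ 0 ∨ c ≠ 0) ∧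
      a • x ^ 2 + b • (x * y) + c • y ^ 2 ∈ maximalIdeal A ^ 3) :
    (∃ x y : A, AuxGen K x y ∧ x * y ∈ maximalIdeal A ^ 3) ∨
    (∃ x y : A, AuxGen K x y ∧ y ^ 2 ∈ maximalIdeal A ^ 3) := by
  obtain ⟨a, b, c, hne, h⟩ := R
  have hx := G.1
  have hy := G.2.1
  by_cases ha : a = 0
  · subst ha
    by_cases hb : b = 0
    · subst hb
      have hc : c ≠ 0 := by simpa using hne
      right
      refine ⟨x, y, G, ?_⟩
      convert aux_smul c⁻¹ h using 1
      simp [smul_smul, hc]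
    · left
      refine ⟨b • x + c • y, y, ?_, ?_⟩
      · refine G.change (Ideal.add_mem _ (aux_smul b hx) (aux_smul c hy)) hy
          ⟨b⁻¹, - (b⁻¹ * c), ?_⟩ ⟨0, 1, ?_⟩
        · convert Ideal.zero_mem _ using 1
          rw [smul_add, smul_smul, smul_smul, inv_mul_cancel₀ hb]
          module
        · convert Ideal.zero_mem _ using 1
          module
      · convert h using 1
        simp only [Algebra.smul_def, map_zero]
        ring
  · obtain ⟨r, s, hb, hc⟩ : ∃ r s : K, b = - a * (r + s) ∧ c = a * (r * s) := by
      obtain ⟨w, hw⟩ := IsAlgClosed.exists_pow_nat_eq ((b / a) ^ 2 - 4 * (c / a)) (n := 2) (by norm_num)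
      refine ⟨(-(b / a) + w) / 2, (-(b / a) - w) / 2, ?_, ?_⟩
      · field_simp; ring
      · have e : b = a * (b / a) := by field_simp
        have e' : c = a * (c / a) := by field_simp
        linear_combination e' + a / 4 * hw
    subst hb hc
    have h' : (x - r • y) * (x - s • y) ∈ maximalIdeal A ^ 3 := by
      convert aux_smul a⁻¹ h using 1
      simp only [Algebra.smul_def, map_mul, map_neg, map_add]
      have : algebraMap K A a⁻¹ * algebraMap K A a = 1 := by
        rw [← map_mul, inv_mul_cancel₀ ha, map_one]
      linear_combination (-(x - algebraMap K A r * y) * (x - algebraMap K A s * y)) * this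
    have hr : x - r • y ∈ maximalIdeal A := Ideal.sub_mem _ hx (aux_smul r hy)
    have hs : x - s • y ∈ maximalIdeal A := Ideal.sub_mem _ hx (aux_smul s hy)
    by_cases hrs : r = s
    · subst hrs
      right
      refine ⟨y, x - r • y, ?_, by rwa [pow_two]⟩
      refine G.change hy hr ⟨r, 1, ?_⟩ ⟨1, 0, ?_⟩
      · convert Ideal.zero_mem _ using 1
        module
      · convert Ideal.zero_mem _ using 1
        module
    · left
      refine ⟨x - r • y, x - s • y, ?_, h'⟩
      have hd : s - r ≠ 0 := sub_ne_zero.2 (Ne.symm hrs)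
      have hd' : (s - r)⁻¹ * s - (s - r)⁻¹ * r = 1 := by field_simp
      refine G.change hr hs ⟨(s - r)⁻¹ * s, - ((s - r)⁻¹ * r), ?_⟩
        ⟨(s - r)⁻¹, - (s - r)⁻¹, ?_⟩
      · convert Ideal.zero_mem _ using 1
        have hv : ((s - r)⁻¹ * s - (s - r)⁻¹ * r) • x = x := by rw [hd', one_smul]
        linear_combination (norm := module) -hv
      · convert Ideal.zero_mem _ using 1
        have hv : ((s - r)⁻¹ * s - (s - r)⁻¹ * r) • y = y := by rw [hd', one_smul]
        linear_combination (norm := module) -hv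

end

/-- Classification of Artinian Gorenstein local `K`-algebras with Hilbert
function `{1,2,2,1}`: `A` is isomorphic to exactly one of
`K[[x_1,x_2]]/(x_1^3, x_2^2)` and `K[[x_1,x_2]]/(x_1x_2, x_1^3 - x_2^3)`. -/
theorem classification_hilbert_1221
    {K : Type*} [Field K] [IsAlgClosed K] [CharZero K]
    (A : Type*) [CommRing A] [IsLocalRing A] [Algebra K A] [IsArtinianRing A]
    (hres : residueFieldIsK K A) (hGor : socDimLoc K A = 1)
    (h0 : hilbLoc K A 0 = 1) (h1 : hilbLoc K A 1 = 2) (h2 : hilbLoc K A 2 = 2)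
    (h3 : hilbLoc K A 3 = 1) (hm4 : IsLocalRing.maximalIdeal A ^ 4 = ⊥) :
    Xor'
      (Nonempty (A ≃ₐ[K] (MvPowerSeries (Fin 2) K ⧸
        (Ideal.span {psX 0 ^ 3, psX 1 ^ 2} : Ideal (MvPowerSeries (Fin 2) K)))))
      (Nonempty (A ≃ₐ[K] (MvPowerSeries (Fin 2) K ⧸
        (Ideal.span {psX 0 * psX 1, psX 0 ^ 3 - psX 1 ^ 3} :
          Ideal (MvPowerSeries (Fin 2) K))))) := by
  obtain ⟨hfin, d0, d1, d2, d3⟩ := aux_dims h0 h1 h2 h3 hm4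
  have F := aux_facts hres hGor hm4 hfin d1 d2 d3
  have nil : ∀ x ∈ maximalIdeal A, IsNilpotent x := by
    intro x hx
    refine ⟨4, ?_⟩
    have := Ideal.pow_mem_pow hx 4
    rw [hm4] at this
    simpa using this
  have mnil : ∀ x : A, IsNilpotent x → x ∈ maximalIdeal A := by
    intro x hx
    rw [mem_maximalIdeal]
    exact fun h => hx.not_isUnit h
  have nil4 : ∀ x y : A, x * y = 0 → x ^ 3 = y ^ 3 → x ^ 4 = 0 ∧ y ^ 4 = 0 := by
    intro x y h h'
    constructor
    · linear_combination x * h' + y ^ 2 * h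
    · linear_combination -y * h' + x ^ 2 * h
  have isoA : ∀ x y : A, AuxGen K x y → x ^ 3 = 0 → y ^ 2 = 0 →
      Nonempty (A ≃ₐ[K] (MvPowerSeries (Fin 2) K ⧸
        (Ideal.span {psX 0 ^ 3, psX 1 ^ 2} : Ideal (MvPowerSeries (Fin 2) K)))) := by
    intro x y G hx hy
    obtain ⟨φ, e0, e1⟩ := aux_hom (K := K) x y (nil x G.1) (nil y G.2.1)
    refine aux_iso d0 _ φ ?_ ?_ _ (aux_six_a _ _ (aux_quot _) ?_ ?_)
    · intro a
      exact G.top F φ.range ⟨_, e0⟩ ⟨_, e1⟩ a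
    · intro a ha
      have : (Ideal.span {psX 0 ^ 3, psX 1 ^ 2} : Ideal (MvPowerSeries (Fin 2) K)) ≤
          RingHom.ker φ := by
        rw [Ideal.span_le]
        rintro f (rfl | rfl)
        · simp [RingHom.mem_ker, e0, hx]
        · simp [RingHom.mem_ker, e1, hy]
      exact this ha
    · rw [← map_pow, Ideal.Quotient.eq_zero_iff_mem]
      exact Ideal.subset_span (by simp)
    · rw [← map_pow, Ideal.Quotient.eq_zero_iff_mem]
      exact Ideal.subset_span (by simp)
  have isoB : ∀ x y : A, AuxGen K x y → x * y = 0 → x ^ 3 = y ^ 3 →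
      Nonempty (A ≃ₐ[K] (MvPowerSeries (Fin 2) K ⧸
        (Ideal.span {psX 0 * psX 1, psX 0 ^ 3 - psX 1 ^ 3} :
          Ideal (MvPowerSeries (Fin 2) K)))) := by
    intro x y G hx hy
    obtain ⟨φ, e0, e1⟩ := aux_hom (K := K) x y (nil x G.1) (nil y G.2.1)
    refine aux_iso d0 _ φ ?_ ?_ _ (aux_six_b _ _ (aux_quot _) ?_ ?_)
    · intro a
      exact G.top F φ.range ⟨_, e0⟩ ⟨_, e1⟩ a
    · intro a ha
      have : (Ideal.span {psX 0 * psX 1, psX 0 ^ 3 - psX 1 ^ 3} :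
          Ideal (MvPowerSeries (Fin 2) K)) ≤ RingHom.ker φ := by
        rw [Ideal.span_le]
        rintro f (rfl | rfl)
        · simp [RingHom.mem_ker, e0, e1, hx]
        · simp [RingHom.mem_ker, e0, e1, hy]
      exact this ha
    · rw [← map_mul, Ideal.Quotient.eq_zero_iff_mem]
      exact Ideal.subset_span (by simp)
    · rw [← map_pow, ← map_pow, ← sub_eq_zero, ← map_sub, Ideal.Quotient.eq_zero_iff_mem]
      exact Ideal.subset_span (by simp)
  have conv : ∀ (I : Ideal (MvPowerSeries (Fin 2) K)) (e : A ≃ₐ[K] (MvPowerSeries (Fin 2) K ⧸ I))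
      (b : A), ∃ (c : K) (g h : A), b = algebraMap K A c + e.symm (Ideal.Quotient.mk I (psX 0)) * g +
        e.symm (Ideal.Quotient.mk I (psX 1)) * h := by
    intro I e b
    obtain ⟨c, g, h, hb⟩ := aux_quot I (e b)
    refine ⟨c, e.symm g, e.symm h, ?_⟩
    have := congrArg e.symm hb
    simpa only [map_add, map_mul, AlgEquiv.symm_apply_apply, AlgEquiv.commutes] using this
  have convA : Nonempty (A ≃ₐ[K] (MvPowerSeries (Fin 2) K ⧸
        (Ideal.span {psX 0 ^ 3, psX 1 ^ 2} : Ideal (MvPowerSeries (Fin 2) K)))) →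
      ∃ x y : A, AuxGen K x y ∧ y ^ 2 = 0 := by
    rintro ⟨e⟩
    have hx : (e.symm (Ideal.Quotient.mk _ (psX 0))) ^ 3 = 0 := by
      rw [← map_pow, ← map_pow, EmbeddingLike.map_eq_zero_iff, Ideal.Quotient.eq_zero_iff_mem]
      exact Ideal.subset_span (by simp)
    have hy : (e.symm (Ideal.Quotient.mk _ (psX 1))) ^ 2 = 0 := by
      rw [← map_pow, ← map_pow, EmbeddingLike.map_eq_zero_iff, Ideal.Quotient.eq_zero_iff_mem]
      exact Ideal.subset_span (by simp)
    exact ⟨_, _, aux_conv (mnil _ ⟨_, hx⟩) (mnil _ ⟨_, hy⟩) (conv _ e), hy⟩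
  have convB : Nonempty (A ≃ₐ[K] (MvPowerSeries (Fin 2) K ⧸
        (Ideal.span {psX 0 * psX 1, psX 0 ^ 3 - psX 1 ^ 3} :
          Ideal (MvPowerSeries (Fin 2) K)))) →
      ∃ x y : A, AuxGen K x y ∧ x * y = 0 ∧ x ^ 3 = y ^ 3 := by
    rintro ⟨e⟩
    have hxy : (e.symm (Ideal.Quotient.mk _ (psX 0))) * (e.symm (Ideal.Quotient.mk _ (psX 1))) = 0 := by
      rw [← map_mul, ← map_mul, EmbeddingLike.map_eq_zero_iff, Ideal.Quotient.eq_zero_iff_mem]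
      exact Ideal.subset_span (by simp)
    have h3 : (e.symm (Ideal.Quotient.mk _ (psX 0))) ^ 3 =
        (e.symm (Ideal.Quotient.mk _ (psX 1))) ^ 3 := by
      rw [← sub_eq_zero, ← map_pow, ← map_pow, ← map_pow, ← map_pow, ← map_sub, ← map_sub,
        EmbeddingLike.map_eq_zero_iff, Ideal.Quotient.eq_zero_iff_mem]
      exact Ideal.subset_span (by simp)
    refine ⟨_, _, aux_conv (mnil _ ⟨4, ?_⟩) (mnil _ ⟨4, ?_⟩) (conv _ e), hxy, h3⟩
    · exact (nil4 _ _ hxy h3).1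
    · exact (nil4 _ _ hxy h3).2
  have hex : (Nonempty (A ≃ₐ[K] (MvPowerSeries (Fin 2) K ⧸
        (Ideal.span {psX 0 ^ 3, psX 1 ^ 2} : Ideal (MvPowerSeries (Fin 2) K))))) ∨
      (Nonempty (A ≃ₐ[K] (MvPowerSeries (Fin 2) K ⧸
        (Ideal.span {psX 0 * psX 1, psX 0 ^ 3 - psX 1 ^ 3} :
          Ideal (MvPowerSeries (Fin 2) K))))) := by
    obtain ⟨x, hx, y, hy, H⟩ := aux_two ((maximalIdeal A ^ 2).restrictScalars K)
      ((maximalIdeal A).restrictScalars K) (Ideal.pow_le_self (I := maximalIdeal A) two_ne_zero)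
      (by omega)
    have G : AuxGen K x y := ⟨hx, hy, by simpa using H⟩
    have R := aux_rel ((maximalIdeal A ^ 3).restrictScalars K)
      ((maximalIdeal A ^ 2).restrictScalars K)
      (Ideal.pow_le_pow_right (I := maximalIdeal A) (by norm_num)) (by omega)
      (x ^ 2) (x * y) (y ^ 2) (Ideal.pow_mem_pow G.1 2) (aux_mm2 G.1 G.2.1)
      (Ideal.pow_mem_pow G.2.1 2)
    rcases aux_cases F G (by simpa using R) with ⟨u, v, G', h⟩ | ⟨u, v, G', h⟩
    · obtain ⟨p, q, G'', e, e'⟩ := aux_case1 F G' h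
      exact Or.inr (isoB p q G'' e e')
    · obtain ⟨p, q, G'', e, e'⟩ := aux_case2 F G' h
      exact Or.inl (isoA p q G'' e e')
  have hno : ∀ _ : Nonempty (A ≃ₐ[K] (MvPowerSeries (Fin 2) K ⧸
        (Ideal.span {psX 0 ^ 3, psX 1 ^ 2} : Ideal (MvPowerSeries (Fin 2) K)))),
      ¬ (Nonempty (A ≃ₐ[K] (MvPowerSeries (Fin 2) K ⧸
        (Ideal.span {psX 0 * psX 1, psX 0 ^ 3 - psX 1 ^ 3} :
          Ideal (MvPowerSeries (Fin 2) K))))) := by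
    intro ha hb
    obtain ⟨x, y, G, hy⟩ := convA ha
    obtain ⟨u, v, G', huv, huv3⟩ := convB hb
    exact aux_disj F G hy G' huv huv3
  rcases hex with h | h
  · exact Or.inl ⟨h, hno h⟩
  · exact Or.inr ⟨h, fun h' => hno h' h⟩
end
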